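/- arXiv:math/0303250 — 3 statements merged into one kernel-verified Lean document; each statement's English description precedes it below -/
import Mathlib

section
/- For all complex numbers q and x with |q| < 1 and |x| < 1, one has Σ_{n=0}^∞ Σ_{c=0}^n (x;q)_{n+1} · x^n · q^{c²+c} · x^{2c} · [n choose c]_q = Σ_{n=0}^∞ χ₂₀⁽⁰⁾(n) · q^{(n²−9)/40} · x^{(n−3)/2}, where on the right-hand side only n ≡ 3, 7, 13, 17 (mod 20) contribute, so that all exponents (n²−9)/40 and (n−3)/2 are nonnegative integers, and both series converge absolutely. -/
/-- The finite q-Pochhammer symbol `(x;q)_n = ∏_{i=1}^n (1 - x q^{i-1})`. -/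
noncomputable def qPoch (q x : ℂ) (n : ℕ) : ℂ := ∏ i ∈ Finset.range n, (1 - x * q ^ i)

/-- The Gaussian binomial coefficient `[n choose c]_q`. -/
noncomputable def qBinom (q : ℂ) (n c : ℕ) : ℂ :=
  if c ≤ n then qPoch q q n / (qPoch q q c * qPoch q q (n - c)) else 0

/-- The 20-periodic function `χ₂₀⁽⁰⁾`. -/
def chi20_0 (n : ℕ) : ℤ :=
  if n % 20 = 3 ∨ n % 20 = 17 then 1
  else if n % 20 = 7 ∨ n % 20 = 13 then -1
  else 0

lemma qPoch_succ (q x : ℂ) (n : ℕ) : qPoch q x (n + 1) = qPoch q x n * (1 - x * q ^ n) := by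
  simp [qPoch, Finset.prod_range_succ]

lemma qPoch_succ' (q x : ℂ) (n : ℕ) : qPoch q x (n + 1) = (1 - x) * qPoch q (x * q) n := by
  simp only [qPoch, Finset.prod_range_succ', pow_zero, mul_one]
  rw [mul_comm]
  congr 1
  refine Finset.prod_congr rfl fun i _ => ?_
  ring

lemma qPoch_zero (q x : ℂ) : qPoch q x 0 = 1 := by simp [qPoch]

lemma one_sub_ne (q : ℂ) (hq : ‖q‖ < 1) (n : ℕ) : 1 - q * q ^ n ≠ 0 := by
  intro h
  have h1 : q ^ (n + 1) = 1 := by rw [pow_succ]; linear_combination -h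
  have h2 : ‖q‖ ^ (n + 1) = 1 := by rw [← norm_pow, h1, norm_one]
  have h3 : ‖q‖ ^ (n + 1) < 1 := pow_lt_one₀ (norm_nonneg _) hq (by omega)
  linarith

lemma qPoch_ne (q : ℂ) (hq : ‖q‖ < 1) (n : ℕ) : qPoch q q n ≠ 0 :=
  Finset.prod_ne_zero_iff.2 fun i _ => one_sub_ne q hq i

lemma qBinom_zero (q : ℂ) (hq : ‖q‖ < 1) (n : ℕ) : qBinom q n 0 = 1 := by
  have := qPoch_ne q hq n
  simp [qBinom, qPoch_zero, this]

lemma qBinom_self (q : ℂ) (hq : ‖q‖ < 1) (n : ℕ) : qBinom q n n = 1 := by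
  have := qPoch_ne q hq n
  simp [qBinom, qPoch_zero, this]

lemma qBinom_gt (q : ℂ) {n c : ℕ} (h : n < c) : qBinom q n c = 0 := by
  simp [qBinom, h]

lemma qBinom_add (q : ℂ) (c m : ℕ) :
    qBinom q (c + m) c = qPoch q q (c + m) / (qPoch q q c * qPoch q q m) := by
  simp [qBinom]

lemma pascal1 (q : ℂ) (hq : ‖q‖ < 1) (n c : ℕ) (h : c ≤ n) :
    qBinom q (n + 1) (c + 1) = qBinom q n (c + 1) + q ^ (n - c) * qBinom q n c := by
  obtain ⟨m, rfl⟩ := Nat.exists_eq_add_of_le h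
  rcases m with _ | m
  · simp [qBinom_self q hq, qBinom_gt q]
  · rw [show c + (m + 1) + 1 = (c + 1) + (m + 1) by ring, qBinom_add, qBinom_add,
      show c + (m + 1) = (c + 1) + m by ring, qBinom_add,
      show c + 1 + m - c = m + 1 by omega, show c + 1 + (m + 1) = (c + 1 + m) + 1 by ring]
    have h1 := qPoch_ne q hq c
    have h2 := qPoch_ne q hq m
    have h3 := one_sub_ne q hq c
    have h4 := one_sub_ne q hq m
    simp only [qPoch_succ q q c, qPoch_succ q q m, qPoch_succ q q (c + 1 + m)]
    field_simp
    ring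

lemma pascal2 (q : ℂ) (hq : ‖q‖ < 1) (n c : ℕ) (h : c ≤ n) :
    qBinom q (n + 1) (c + 1) = q ^ (c + 1) * qBinom q n (c + 1) + qBinom q n c := by
  obtain ⟨m, rfl⟩ := Nat.exists_eq_add_of_le h
  rcases m with _ | m
  · simp [qBinom_self q hq, qBinom_gt q]
  · rw [show c + (m + 1) + 1 = (c + 1) + (m + 1) by ring, qBinom_add, qBinom_add,
      show c + (m + 1) = (c + 1) + m by ring, qBinom_add,
      show c + 1 + (m + 1) = (c + 1 + m) + 1 by ring]
    have h1 := qPoch_ne q hq c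
    have h2 := qPoch_ne q hq m
    have h3 := one_sub_ne q hq c
    have h4 := one_sub_ne q hq m
    simp only [qPoch_succ q q c, qPoch_succ q q m, qPoch_succ q q (c + 1 + m)]
    field_simp
    ring

/-- The inner polynomial. -/
noncomputable def bb (q x : ℂ) (j n : ℕ) : ℂ :=
  ∑ c ∈ Finset.range (n + 1), q ^ (c ^ 2 + j * c) * x ^ (2 * c) * qBinom q n c

lemma bb_zero (q x : ℂ) (hq : ‖q‖ < 1) (j : ℕ) : bb q x j 0 = 1 := by
  simp [bb, qBinom_zero q hq]

lemma bb_ext (q x : ℂ) (j n : ℕ) :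
    bb q x j n = ∑ c ∈ Finset.range (n + 2), q ^ (c ^ 2 + j * c) * x ^ (2 * c) * qBinom q n c := by
  rw [Finset.sum_range_succ, qBinom_gt q (Nat.lt_succ_self n)]
  simp [bb]

lemma bb_rec1 (q x : ℂ) (hq : ‖q‖ < 1) (j n : ℕ) :
    bb q x j (n + 1) = bb q x j n + x ^ 2 * q ^ (n + 1 + j) * bb q x (j + 1) n := by
  rw [bb_ext q x j n, bb, bb, Finset.sum_range_succ', Finset.sum_range_succ' _ (n + 1),
    Finset.mul_sum]
  rw [qBinom_zero q hq, qBinom_zero q hq, add_right_comm, ← Finset.sum_add_distrib]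
  congr 1
  refine Finset.sum_congr rfl fun c hc => ?_
  have hc : c ≤ n := by simpa [Nat.lt_succ_iff] using hc
  rw [pascal1 q hq n c hc]
  obtain ⟨m, rfl⟩ := Nat.exists_eq_add_of_le hc
  rw [Nat.add_sub_cancel_left]
  ring

lemma bb_rec2 (q x : ℂ) (hq : ‖q‖ < 1) (j n : ℕ) :
    bb q x j (n + 1) = bb q x (j + 1) n + x ^ 2 * q ^ (j + 1) * bb q x (j + 2) n := by
  rw [bb_ext q x (j + 1) n, bb, bb, Finset.sum_range_succ', Finset.sum_range_succ' _ (n + 1),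
    Finset.mul_sum]
  rw [qBinom_zero q hq, qBinom_zero q hq, add_right_comm, ← Finset.sum_add_distrib]
  congr 1
  · refine Finset.sum_congr rfl fun c hc => ?_
    have hc : c ≤ n := by simpa [Nat.lt_succ_iff] using hc
    rw [pascal2 q hq n c hc]
    ring

/-- The majorant constant. -/
noncomputable def CC (q : ℂ) : ℝ := Real.exp (∑' i : ℕ, ‖q‖ ^ i)

lemma prod_le_CC (q : ℂ) (hq : ‖q‖ < 1) (n : ℕ) :
    ∏ i ∈ Finset.range n, (1 + ‖q‖ ^ i) ≤ CC q := by
  calc ∏ i ∈ Finset.range n, (1 + ‖q‖ ^ i) ≤ ∏ i ∈ Finset.range n, Real.exp (‖q‖ ^ i) := by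
        refine Finset.prod_le_prod (fun i _ => by positivity) fun i _ => ?_
        rw [add_comm]; exact Real.add_one_le_exp _
    _ = Real.exp (∑ i ∈ Finset.range n, ‖q‖ ^ i) := (Real.exp_sum _ _).symm
    _ ≤ CC q := by
        refine Real.exp_le_exp.2 ?_
        exact (summable_geometric_of_lt_one (norm_nonneg _) hq).sum_le_tsum _
          (fun i _ => by positivity)

lemma qPoch_le (q x : ℂ) (hq : ‖q‖ < 1) (hx : ‖x‖ ≤ 1) (n : ℕ) : ‖qPoch q x n‖ ≤ CC q := by
  refine le_trans ?_ (prod_le_CC q hq n)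
  rw [qPoch, norm_prod]
  refine Finset.prod_le_prod (fun i _ => norm_nonneg _) fun i _ => ?_
  refine (norm_sub_le _ _).trans ?_
  rw [norm_one, norm_mul, norm_pow]
  have : ‖x‖ * ‖q‖ ^ i ≤ 1 * ‖q‖ ^ i := by gcongr
  linarith

lemma bb_le' (q x : ℂ) (hq : ‖q‖ < 1) (hx : ‖x‖ ≤ 1) (n : ℕ) : ∀ j,
    ‖bb q x j n‖ ≤ ∏ i ∈ Finset.range n, (1 + ‖q‖ ^ i) := by
  induction n with
  | zero => intro j; simp [bb_zero q x hq]
  | succ n ih =>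
    intro j
    rw [bb_rec1 q x hq, Finset.prod_range_succ]
    refine (norm_add_le _ _).trans ?_
    rw [norm_mul, norm_mul, norm_pow, norm_pow]
    have h1 : ‖x‖ ^ 2 ≤ 1 := pow_le_one₀ (norm_nonneg _) hx
    have h2 : ‖q‖ ^ (n + 1 + j) ≤ ‖q‖ ^ n :=
      pow_le_pow_of_le_one (norm_nonneg _) hq.le (by omega)
    have h3 : ‖x‖ ^ 2 * ‖q‖ ^ (n + 1 + j) * ‖bb q x (j + 1) n‖ ≤
        1 * ‖q‖ ^ n * ∏ i ∈ Finset.range n, (1 + ‖q‖ ^ i) := by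
      gcongr
      exact ih _
    have := ih j
    linarith

lemma bb_le (q x : ℂ) (hq : ‖q‖ < 1) (hx : ‖x‖ ≤ 1) (j n : ℕ) : ‖bb q x j n‖ ≤ CC q :=
  (bb_le' q x hq hx n j).trans (prod_le_CC q hq n)

/-- The auxiliary double series terms. -/
noncomputable def pp (q x : ℂ) (i j n : ℕ) : ℂ :=
  qPoch q (x * q) n * x ^ n * q ^ (i * n) * bb q x j n

lemma CC_pos (q : ℂ) : 0 < CC q := Real.exp_pos _

lemma pp_summable (q x : ℂ) (hq : ‖q‖ < 1) (hx : ‖x‖ < 1) (i j : ℕ) :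
    Summable (pp q x i j) := by
  have hC := CC_pos q
  refine Summable.of_norm_bounded (g := fun n => CC q * ‖x‖ ^ n * 1 * CC q) ?_ fun n => ?_
  · exact (((summable_geometric_of_lt_one (norm_nonneg _) hx).mul_left _).mul_right _).mul_right _
  · have hxq : ‖x * q‖ ≤ 1 := by
      rw [norm_mul]; exact mul_le_one₀ hx.le (norm_nonneg _) hq.le
    have h1 := qPoch_le q (x * q) hq hxq n
    have h2 := bb_le q x hq hx.le j n
    have h3 : ‖q‖ ^ (i * n) ≤ 1 := pow_le_one₀ (norm_nonneg _) hq.le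
    rw [pp, norm_mul, norm_mul, norm_mul, norm_pow, norm_pow]
    gcongr

/-- The auxiliary double series. -/
noncomputable def PP (q x : ℂ) (i j : ℕ) : ℂ := ∑' n, pp q x i j n

lemma PP_A (q x : ℂ) (hq : ‖q‖ < 1) (hx : ‖x‖ < 1) (i j : ℕ) :
    PP q x i j = 1 + x * q ^ i * (PP q x i j - x * q * PP q x (i + 1) j
      + x ^ 2 * q ^ (j + 1) * (PP q x (i + 1) (j + 1) - x * q * PP q x (i + 2) (j + 1))) := by
  have s := pp_summable q x hq hx
  have h : ∀ n, pp q x i j (n + 1) = x * q ^ i * (pp q x i j n - x * q * pp q x (i + 1) j n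
      + x ^ 2 * q ^ (j + 1) * (pp q x (i + 1) (j + 1) n - x * q * pp q x (i + 2) (j + 1) n)) := by
    intro n
    simp only [pp, qPoch_succ, bb_rec1 q x hq]
    ring
  have h0 : pp q x i j 0 = 1 := by simp [pp, qPoch_zero, bb_zero q x hq]
  have e : HasSum (fun n => pp q x i j (n + 1)) (x * q ^ i * (PP q x i j - x * q * PP q x (i + 1) j
      + x ^ 2 * q ^ (j + 1) * (PP q x (i + 1) (j + 1) - x * q * PP q x (i + 2) (j + 1)))) := by
    simp only [h]
    exact (((s i j).hasSum.sub ((s (i + 1) j).hasSum.mul_left _)).add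
      (((s (i + 1) (j + 1)).hasSum.sub ((s (i + 2) (j + 1)).hasSum.mul_left _)).mul_left _)).mul_left _
  have := (s i j).tsum_eq_zero_add
  rw [e.tsum_eq, h0] at this
  exact this

lemma PP_B (q x : ℂ) (hq : ‖q‖ < 1) (hx : ‖x‖ < 1) (i j : ℕ) :
    PP q x i j = 1 + x * q ^ i * (PP q x i (j + 1) - x * q * PP q x (i + 1) (j + 1)
      + x ^ 2 * q ^ (j + 1) * (PP q x i (j + 2) - x * q * PP q x (i + 1) (j + 2))) := by
  have s := pp_summable q x hq hx
  have h : ∀ n, pp q x i j (n + 1) = x * q ^ i * (pp q x i (j + 1) n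
      - x * q * pp q x (i + 1) (j + 1) n
      + x ^ 2 * q ^ (j + 1) * (pp q x i (j + 2) n - x * q * pp q x (i + 1) (j + 2) n)) := by
    intro n
    simp only [pp, qPoch_succ, bb_rec2 q x hq]
    ring
  have h0 : pp q x i j 0 = 1 := by simp [pp, qPoch_zero, bb_zero q x hq]
  have e : HasSum (fun n => pp q x i j (n + 1)) (x * q ^ i * (PP q x i (j + 1)
      - x * q * PP q x (i + 1) (j + 1)
      + x ^ 2 * q ^ (j + 1) * (PP q x i (j + 2) - x * q * PP q x (i + 1) (j + 2)))) := by
    simp only [h]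
    exact (((s i (j + 1)).hasSum.sub ((s (i + 1) (j + 1)).hasSum.mul_left _)).add
      (((s i (j + 2)).hasSum.sub ((s (i + 1) (j + 2)).hasSum.mul_left _)).mul_left _)).mul_left _
  have := (s i j).tsum_eq_zero_add
  rw [e.tsum_eq, h0] at this
  exact this

/-- The left-hand terms. -/
noncomputable def ff (q x : ℂ) (n : ℕ) : ℂ := qPoch q x (n + 1) * x ^ n * bb q x 1 n

lemma ff_eq (q x : ℂ) (n : ℕ) : ff q x n = ∑ c ∈ Finset.range (n + 1),
    qPoch q x (n + 1) * x ^ n * q ^ (c ^ 2 + c) * x ^ (2 * c) * qBinom q n c := by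
  rw [ff, bb, Finset.mul_sum]
  refine Finset.sum_congr rfl fun c _ => ?_
  rw [one_mul]; ring

lemma ff_le (q x : ℂ) (hq : ‖q‖ < 1) (r : ℝ) (hr : r < 1) (hx : ‖x‖ ≤ r) (n : ℕ) :
    ‖ff q x n‖ ≤ CC q * r ^ n * CC q := by
  have hC := CC_pos q
  have h1 := qPoch_le q x hq (hx.trans hr.le) (n + 1)
  have h2 := bb_le q x hq (hx.trans hr.le) 1 n
  have h0 : 0 ≤ r := (norm_nonneg _).trans hx
  rw [ff, norm_mul, norm_mul, norm_pow]
  gcongr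

lemma ff_bound_summable (q : ℂ) (r : ℝ) (h0 : 0 ≤ r) (hr : r < 1) :
    Summable (fun n : ℕ => CC q * r ^ n * CC q) :=
  ((summable_geometric_of_lt_one h0 hr).mul_left _).mul_right _

lemma ff_summable (q x : ℂ) (hq : ‖q‖ < 1) (hx : ‖x‖ < 1) : Summable (ff q x) :=
  Summable.of_norm_bounded (ff_bound_summable q ‖x‖ (norm_nonneg _) hx)
    (ff_le q x hq ‖x‖ hx le_rfl)

lemma norm_qx (q x : ℂ) (hq : ‖q‖ < 1) : ‖q * x‖ ≤ ‖x‖ := by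
  rw [norm_mul]; exact mul_le_of_le_one_left (norm_nonneg _) hq.le

lemma bb_shift (q x : ℂ) (n : ℕ) : bb q (q * x) 1 n = bb q x 3 n := by
  rw [bb, bb]
  refine Finset.sum_congr rfl fun c _ => ?_
  ring

lemma FF_rec (q x : ℂ) (hq : ‖q‖ < 1) (hx : ‖x‖ < 1) :
    ∑' n, ff q x n = 1 - q * x ^ 2 - q ^ 4 * x ^ 5 * ∑' n, ff q (q * x) n := by
  have s := pp_summable q x hq hx
  have h1 : ∑' n, ff q x n = (1 - x) * PP q x 0 1 := by
    rw [PP, ← tsum_mul_left]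
    refine tsum_congr fun n => ?_
    rw [ff, pp, qPoch_succ']; ring
  have h2 : ∑' n, ff q (q * x) n = PP q x 1 3 - x * q * PP q x 2 3 := by
    refine HasSum.tsum_eq ?_
    have : ff q (q * x) = fun n => pp q x 1 3 n - x * q * pp q x 2 3 n := by
      funext n
      rw [ff, pp, pp, bb_shift, qPoch_succ, mul_comm q x]; ring
    rw [this]
    exact (s 1 3).hasSum.sub ((s 2 3).hasSum.mul_left _)
  have hA := PP_A q x hq hx 0 1
  have hB := PP_B q x hq hx 1 1
  norm_num at hA hB
  rw [h1, h2]
  linear_combination hA - x ^ 2 * q * hB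

/-- The right-hand terms. -/
noncomputable def gg (q x : ℂ) (n : ℕ) : ℂ :=
  (chi20_0 n : ℂ) * q ^ ((n ^ 2 - 9) / 40) * x ^ ((n - 3) / 2)

lemma gg_le (q x : ℂ) (hq : ‖q‖ < 1) (s : ℝ) (hs : 0 ≤ s) (hx : ‖x‖ ≤ s ^ 2) (n : ℕ) :
    ‖gg q x n‖ ≤ s ^ (n - 3) := by
  by_cases hc : chi20_0 n = 0
  · simp only [gg, hc]; simp; positivity
  · have h1 : ‖(chi20_0 n : ℂ)‖ ≤ 1 := by
      unfold chi20_0; split_ifs <;> simp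
    have h2 : n - 3 = 2 * ((n - 3) / 2) := by
      unfold chi20_0 at hc; split_ifs at hc <;> omega
    have h3 : ‖q‖ ^ ((n ^ 2 - 9) / 40) ≤ 1 := pow_le_one₀ (norm_nonneg _) hq.le
    rw [gg, norm_mul, norm_mul, norm_pow, norm_pow, h2, pow_mul, ← h2]
    calc _ ≤ 1 * 1 * (s ^ 2) ^ ((n - 3) / 2) := by gcongr
      _ = _ := by ring

lemma gg_bound_summable (s : ℝ) (h0 : 0 ≤ s) (hs : s < 1) :
    Summable (fun n : ℕ => s ^ (n - 3)) := by
  rw [← summable_nat_add_iff 3]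
  simpa using summable_geometric_of_lt_one h0 hs

lemma sqrt_facts (r : ℝ) (h0 : 0 ≤ r) (hr : r < 1) :
    0 ≤ √r ∧ √r < 1 ∧ r = √r ^ 2 :=
  ⟨Real.sqrt_nonneg _, by rw [Real.sqrt_lt' one_pos]; simpa using hr, (Real.sq_sqrt h0).symm⟩

lemma gg_summable (q x : ℂ) (hq : ‖q‖ < 1) (hx : ‖x‖ < 1) : Summable (gg q x) := by
  obtain ⟨h1, h2, h3⟩ := sqrt_facts ‖x‖ (norm_nonneg _) hx
  exact Summable.of_norm_bounded (gg_bound_summable _ h1 h2) (gg_le q x hq _ h1 h3.le)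

lemma gg_shift (q x : ℂ) (n : ℕ) : gg q x (n + 10) = -(q ^ 4 * x ^ 5) * gg q (q * x) n := by
  have hchi : chi20_0 (n + 10) = - chi20_0 n := by
    unfold chi20_0; split_ifs <;> first | rfl | omega
  by_cases hc : chi20_0 n = 0
  · simp [gg, hchi, hc]
  · have hn : ∃ m, n = 2 * m + 3 ∧ 40 ∣ n ^ 2 - 9 := by
      have hk : n = 20 * (n / 20) + n % 20 := by omega
      generalize n / 20 = k at hk
      have : n % 20 = 3 ∨ n % 20 = 7 ∨ n % 20 = 13 ∨ n % 20 = 17 := by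
        unfold chi20_0 at hc; split_ifs at hc <;> omega
      refine ⟨(n - 3) / 2, by omega, ?_⟩
      rcases this with h | h | h | h <;> rw [h] at hk <;> subst hk
      · exact ⟨10 * k ^ 2 + 3 * k, by rw [Nat.sub_eq_iff_eq_add (Nat.pow_le_pow_left (by omega : 3 ≤ _) 2)]; ring⟩
      · exact ⟨10 * k ^ 2 + 7 * k + 1, by rw [Nat.sub_eq_iff_eq_add (Nat.pow_le_pow_left (by omega : 3 ≤ _) 2)]; ring⟩
      · exact ⟨10 * k ^ 2 + 13 * k + 4, by rw [Nat.sub_eq_iff_eq_add (Nat.pow_le_pow_left (by omega : 3 ≤ _) 2)]; ring⟩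
      · exact ⟨10 * k ^ 2 + 17 * k + 7, by rw [Nat.sub_eq_iff_eq_add (Nat.pow_le_pow_left (by omega : 3 ≤ _) 2)]; ring⟩
    obtain ⟨m, hm, k, hk⟩ := hn
    have e1 : (n ^ 2 - 9) / 40 = k := by omega
    have e2 : ((n + 10) ^ 2 - 9) / 40 = k + m + 4 := by
      have : (n + 10) ^ 2 = n ^ 2 + 20 * n + 100 := by ring
      have h9 : 9 ≤ n ^ 2 := by nlinarith
      omega
    have e3 : (n - 3) / 2 = m := by omega
    have e4 : (n + 10 - 3) / 2 = m + 5 := by omega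
    rw [gg, gg, hchi, e1, e2, e3, e4]
    push_cast
    ring

lemma GG_rec (q x : ℂ) (hq : ‖q‖ < 1) (hx : ‖x‖ < 1) :
    ∑' n, gg q x n = 1 - q * x ^ 2 - q ^ 4 * x ^ 5 * ∑' n, gg q (q * x) n := by
  rw [← (gg_summable q x hq hx).sum_add_tsum_nat_add 10]
  simp only [gg_shift]
  rw [tsum_mul_left]
  have : ∑ i ∈ Finset.range 10, gg q x i = 1 - q * x ^ 2 := by
    simp [Finset.sum_range_succ, gg, chi20_0]
    ring
  rw [this]; ring

lemma main_eq (q x : ℂ) (hq : ‖q‖ < 1) (hx : ‖x‖ < 1) : ∑' n, ff q x n = ∑' n, gg q x n := by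
  obtain ⟨h1, h2, h3⟩ := sqrt_facts ‖x‖ (norm_nonneg _) hx
  set K : ℝ := (∑' n : ℕ, CC q * ‖x‖ ^ n * CC q) + ∑' n : ℕ, √‖x‖ ^ (n - 3) with hK
  have key : ∀ k : ℕ, ∀ y : ℂ, ‖y‖ ≤ ‖x‖ →
      ‖∑' n, ff q y n - ∑' n, gg q y n‖ ≤ ‖x‖ ^ k * K := by
    intro k
    induction k with
    | zero =>
      intro y hy
      rw [pow_zero, one_mul]
      refine (norm_sub_le _ _).trans (add_le_add ?_ ?_)
      · exact tsum_of_norm_bounded (ff_bound_summable q _ (norm_nonneg _) hx).hasSum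
          (ff_le q y hq _ hx hy)
      · exact tsum_of_norm_bounded (gg_bound_summable _ h1 h2).hasSum
          (gg_le q y hq _ h1 (hy.trans h3.le))
    | succ k ih =>
      intro y hy
      have hy1 := hy.trans_lt hx
      have := ih (q * y) ((norm_qx q y hq).trans hy)
      rw [FF_rec q y hq hy1, GG_rec q y hq hy1]
      have e : ∀ a b : ℂ, 1 - q * y ^ 2 - q ^ 4 * y ^ 5 * a - (1 - q * y ^ 2 - q ^ 4 * y ^ 5 * b)
        = -(q ^ 4 * y ^ 4) * y * (a - b) := fun a b => by ring
      rw [e, norm_mul, norm_mul, norm_neg, norm_mul, norm_pow, norm_pow]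
      have a1 : ‖q‖ ^ 4 ≤ 1 := pow_le_one₀ (norm_nonneg _) hq.le
      have a2 : ‖y‖ ^ 4 ≤ 1 := pow_le_one₀ (norm_nonneg _) hy1.le
      calc _ ≤ 1 * 1 * ‖x‖ * (‖x‖ ^ k * K) := by gcongr
        _ = _ := by ring
  have lim : Filter.Tendsto (fun k : ℕ => ‖x‖ ^ k * K) Filter.atTop (nhds (0 * K)) :=
    (tendsto_pow_atTop_nhds_zero_of_lt_one (norm_nonneg _) hx).mul_const K
  rw [zero_mul] at lim
  have := ge_of_tendsto' lim (fun k => key k x le_rfl)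
  exact sub_eq_zero.1 (norm_le_zero_iff.1 this)

theorem stmt_0 (q x : ℂ) (hq : ‖q‖ < 1) (hx : ‖x‖ < 1) :
    Summable (fun n : ℕ => ∑ c ∈ Finset.range (n + 1),
      qPoch q x (n + 1) * x ^ n * q ^ (c ^ 2 + c) * x ^ (2 * c) * qBinom q n c) ∧
    Summable (fun n : ℕ =>
      (chi20_0 n : ℂ) * q ^ ((n ^ 2 - 9) / 40) * x ^ ((n - 3) / 2)) ∧
    ∑' n : ℕ, ∑ c ∈ Finset.range (n + 1),
        qPoch q x (n + 1) * x ^ n * q ^ (c ^ 2 + c) * x ^ (2 * c) * qBinom q n c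
      = ∑' n : ℕ, (chi20_0 n : ℂ) * q ^ ((n ^ 2 - 9) / 40) * x ^ ((n - 3) / 2) := by
  simp only [← ff_eq]
  exact ⟨ff_summable q x hq hx, gg_summable q x hq hx, main_eq q x hq hx⟩
end

section
/- Let p be a positive integer and χ : ℤ → ℂ a p-periodic function with mean value zero, i.e. Σ_{n=1}^p χ(n) = 0, and let L(s, χ) denote the entire analytic continuation of the Dirichlet series Σ_{n=1}^∞ χ(n) n^{−s}. Then for every N ∈ ℕ, as t → 0⁺ (t real, positive), Σ_{n=1}^∞ n·χ(n)·e^{−n²t} = Σ_{k=0}^{N−1} L(−2k−1, χ) · (−t)^k / k! + O(t^N). -/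
open scoped Topology
/-- iterated forward difference -/
noncomputable def DD : ℕ → (ℝ → ℂ) → ℝ → ℂ
  | 0, f => f
  | (M+1), f => fun x => DD M f (x+1) - DD M f x

noncomputable def hh (b : ℕ) (a : ℂ) (t : ℝ) (x : ℝ) : ℂ :=
  (t:ℂ)^b * ((x:ℂ)^a * Complex.exp (-((t:ℂ) * (x:ℂ)^2)))

lemma hh_deriv (b : ℕ) (a : ℂ) (t x : ℝ) (hx : 0 < x) :
    HasDerivAt (hh b a t) (a * hh b (a-1) t x - 2 * hh (b+1) (a+1) t x) x := by
  have hx' : (x:ℂ) ≠ 0 := by exact_mod_cast hx.ne'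
  have h1 : HasDerivAt (fun z : ℂ => z^a) (a * (x:ℂ)^(a-1) * 1) (x:ℂ) :=
    (hasDerivAt_id (x:ℂ)).cpow_const (Complex.ofReal_mem_slitPlane.2 hx)
  have h2 : HasDerivAt (fun z : ℂ => Complex.exp (-((t:ℂ) * z^2)))
      (Complex.exp (-((t:ℂ) * (x:ℂ)^2)) * (-((t:ℂ) * (2 * (x:ℂ))))) (x:ℂ) := by
    have := (((hasDerivAt_pow 2 (x:ℂ)).const_mul (t:ℂ)).neg).cexp
    simpa using this
  have h3 := ((h1.mul h2).const_mul ((t:ℂ)^b)).comp_ofReal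
  refine h3.congr_deriv ?_
  simp only [hh]
  rw [Complex.cpow_add _ _ hx', Complex.cpow_one]
  ring

lemma DD_lin (M : ℕ) (f g : ℝ → ℂ) (c d : ℂ) (x : ℝ) :
    DD M (fun y => c * f y - d * g y) x = c * DD M f x - d * DD M g x := by
  induction M generalizing x with
  | zero => rfl
  | succ M ih => simp only [DD, ih]; ring

lemma DD_deriv (M : ℕ) (f f' : ℝ → ℂ) (h : ∀ x, 0 < x → HasDerivAt f (f' x) x) (x : ℝ)
    (hx : 0 < x) : HasDerivAt (DD M f) (DD M f' x) x := by
  induction M generalizing x with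
  | zero => exact h x hx
  | succ M ih => exact ((ih (x+1) (by linarith)).comp_add_const x 1).sub (ih x hx)

lemma hh_norm (b : ℕ) (a : ℂ) (t x : ℝ) (ht : 0 ≤ t) (hx : 0 < x) :
    ‖hh b a t x‖ ≤ (b.factorial : ℝ) * x ^ (a.re - 2 * b) := by
  have e : Complex.exp (-((t:ℂ) * (x:ℂ)^2)) = ((Real.exp (-(t*x^2)) : ℝ) : ℂ) := by push_cast; rfl
  rw [hh, norm_mul, norm_mul, norm_pow, Complex.norm_cpow_eq_rpow_re_of_pos hx, e,
    Complex.norm_real, Complex.norm_real, Real.norm_of_nonneg ht,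
    Real.norm_of_nonneg (Real.exp_pos _).le]
  have hu : 0 ≤ t * x^2 := by positivity
  have h1 := Real.pow_div_factorial_le_exp _ hu b
  rw [div_le_iff₀ (by positivity)] at h1
  have h2 : x ^ (a.re) = x ^ (a.re - 2*b) * (x^2)^b := by
    rw [← pow_mul, ← Real.rpow_natCast, ← Real.rpow_add hx]; congr 1; push_cast; ring
  rw [h2, Real.exp_neg]
  have h3 : (t*x^2)^b * (Real.exp (t*x^2))⁻¹ ≤ b.factorial := by
    rw [← div_eq_mul_inv, div_le_iff₀ (Real.exp_pos _)]; linarith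
  calc _ = ((t*x^2)^b * (Real.exp (t*x^2))⁻¹) * x ^ (a.re - 2*b) := by rw [mul_pow]; ring
    _ ≤ _ := by gcongr

lemma DD_bound (M : ℕ) : ∀ (b : ℕ) (R : ℝ), 0 ≤ R → ∃ C : ℝ, 0 ≤ C ∧ ∀ a : ℂ, ‖a‖ ≤ R → ∀ t : ℝ, 0 ≤ t →
    ∀ x : ℝ, 1 ≤ x → ‖DD M (hh b a t) x‖ ≤ C * x ^ (a.re - 2 * b - M) := by
  induction M with
  | zero =>
    intro b R hR
    refine ⟨b.factorial, by positivity, fun a _ t ht x hx => ?_⟩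
    simpa [DD] using hh_norm b a t x ht (by linarith)
  | succ M ih =>
    intro b R hR
    obtain ⟨C1, hC1, h1⟩ := ih b (R+1) (by linarith)
    obtain ⟨C2, hC2, h2⟩ := ih (b+1) (R+1) (by linarith)
    set K : ℝ := R with hK
    refine ⟨(R * C1 + 2 * C2) * 2 ^ K, by positivity, fun a ha t ht x hx => ?_⟩
    set e : ℝ := a.re - 2 * b - (M+1 : ℕ) with he
    have hre : a.re ≤ R := (Complex.re_le_norm a).trans ha
    have hx0 : 0 < x := by linarith
    have key : ∀ y ∈ Set.Icc x (x+1), ‖a * DD M (hh b (a-1) t) y - 2 * DD M (hh (b+1) (a+1) t) y‖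
        ≤ (R * C1 + 2 * C2) * 2^K * x^e := by
      intro y hy
      have hy1 : 1 ≤ y := hx.trans hy.1
      have hy0 : 0 < y := by linarith
      have n1 : ‖a - 1‖ ≤ R + 1 := (norm_sub_le _ _).trans (by simpa using ha)
      have n2 : ‖a + 1‖ ≤ R + 1 := (norm_add_le _ _).trans (by simpa using ha)
      have b1 := h1 (a-1) n1 t ht y hy1
      have b2 := h2 (a+1) n2 t ht y hy1
      have e1 : (a-1).re - 2 * b - M = e := by simp [he]; ring
      have e2 : (a+1).re - 2 * ((b+1 : ℕ):ℝ) - M = e := by simp [he]; ring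
      rw [e1] at b1
      rw [e2] at b2
      have hye : y ^ e ≤ 2^K * x^e := by
        have q1 : 1 ≤ y / x := (one_le_div hx0).2 hy.1
        have q2 : y / x ≤ 2 := (div_le_iff₀ hx0).2 (by linarith [hy.2])
        have : y = (y/x) * x := by field_simp
        rw [this, Real.mul_rpow (by positivity) hx0.le]
        gcongr
        calc (y/x)^e ≤ (y/x)^K := Real.rpow_le_rpow_of_exponent_le q1 (by
              have : (0:ℝ) ≤ b := by positivity
              have : (0:ℝ) ≤ (M+1:ℕ) := by positivity
              rw [he]; linarith)
          _ ≤ 2^K := Real.rpow_le_rpow (by positivity) q2 hR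
      calc _ ≤ ‖a‖ * ‖DD M (hh b (a-1) t) y‖ + 2 * ‖DD M (hh (b+1) (a+1) t) y‖ := by
            refine (norm_sub_le _ _).trans (by simp)
        _ ≤ R * (C1 * y^e) + 2 * (C2 * y^e) := by gcongr
        _ = (R * C1 + 2 * C2) * y^e := by ring
        _ ≤ (R * C1 + 2 * C2) * (2^K * x^e) := by gcongr
        _ = _ := by ring
    have := (convex_Icc x (x+1)).norm_image_sub_le_of_norm_hasDerivWithin_le
      (f := DD M (hh b a t)) (f' := fun y => a * DD M (hh b (a-1) t) y - 2 * DD M (hh (b+1) (a+1) t) y)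
      (fun y hy => by
        have := DD_deriv M (hh b a t) (fun y => a * hh b (a-1) t y - 2 * hh (b+1) (a+1) t y)
          (fun y hy => hh_deriv b a t y hy) y (by linarith [hy.1])
        rw [DD_lin] at this
        exact this.hasDerivWithinAt) key (x := x) (y := x+1)
      (by simp) (by simp)
    simpa [DD] using this

lemma hh_summable (a : ℂ) (t : ℝ) (ht : 0 < t) : Summable (fun n : ℕ => hh 0 a t ((n:ℝ)+1)) := by
  obtain ⟨b, hb⟩ := exists_nat_gt ((a.re + 2) / 2)
  have ht' : (t:ℂ) ≠ 0 := by exact_mod_cast ht.ne'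
  have hs : Summable (fun n : ℕ => ((n:ℝ)+1) ^ (-2:ℝ)) := by
    have := (summable_nat_add_iff 1).2 (Real.summable_nat_rpow.2 (show (-2:ℝ) < -1 by norm_num))
    simpa using this
  have : Summable (fun n : ℕ => hh b a t ((n:ℝ)+1)) := by
    refine Summable.of_norm_bounded (hs.mul_left (b.factorial:ℝ)) fun n => ?_
    refine (hh_norm b a t _ ht.le (by positivity)).trans ?_
    gcongr
    · linarith [show (0:ℝ) ≤ n by positivity]
    · linarith
  refine (this.mul_left ((t:ℂ)^b)⁻¹).congr fun n => ?_
  simp only [hh]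
  field_simp

/-- Periodic with mean zero -/
def PMZ (p : ℕ) (ψ : ℕ → ℂ) : Prop := (∀ n, ψ (n+p) = ψ n) ∧ ∑ n ∈ Finset.range p, ψ n = 0

lemma PMZ.bdd {p : ℕ} (hp : 0 < p) {ψ : ℕ → ℂ} (h : PMZ p ψ) : ∃ B : ℝ, 0 ≤ B ∧ ∀ n, ‖ψ n‖ ≤ B := by
  refine ⟨∑ n ∈ Finset.range p, ‖ψ n‖, by positivity, fun n => ?_⟩
  have : ψ n = ψ (n % p) := ((Function.Periodic.map_mod_nat (f := ψ) h.1) n).symm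
  rw [this]
  exact Finset.single_le_sum (f := fun n => ‖ψ n‖) (fun _ _ => norm_nonneg _)
    (Finset.mem_range.2 (Nat.mod_lt _ hp))

lemma sum_mul {p : ℕ} (hp : 0 < p) {ψ : ℕ → ℂ} (h : PMZ p ψ) {g : ℕ → ℂ} (hg : Summable g) :
    Summable (fun n => ψ n * g n) := by
  obtain ⟨B, _, hB⟩ := h.bdd hp
  refine Summable.of_norm_bounded (hg.norm.mul_left B) fun n => ?_
  rw [norm_mul]; gcongr; exact hB n

lemma abel_step {p : ℕ} (hp : 0 < p) {ψ : ℕ → ℂ} (h : PMZ p ψ) : ∃ (c : ℂ) (T : ℕ → ℂ), PMZ p T ∧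
    ∀ f : ℕ → ℂ, Summable f → ∑' n, ψ n * f n = c * f 0 + ∑' n, T n * (f (n+1) - f n) := by
  have hp' : (p:ℂ) ≠ 0 := by exact_mod_cast hp.ne'
  set m : ℂ := (∑ n ∈ Finset.range p, ∑ i ∈ Finset.range n, ψ i) / p with hm
  set S : ℕ → ℂ := fun n => ∑ i ∈ Finset.range n, ψ i - m with hS
  have S1 : ∀ n, S (n+1) - S n = ψ n := fun n => by simp [hS, Finset.sum_range_succ]
  have Sper : ∀ n, S (n+p) = S n := by
    intro n
    induction n with
    | zero => simp [hS, h.2]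
    | succ n ih =>
      have a1 := S1 n
      have a2 := S1 (n+p)
      rw [h.1] at a2
      rw [show n+1+p = n+p+1 by ring]
      linear_combination a2 - a1 + ih
  have Ssum : ∑ n ∈ Finset.range p, S n = 0 := by
    simp only [hS, Finset.sum_sub_distrib, Finset.sum_const, Finset.card_range, nsmul_eq_mul, hm]
    field_simp; ring
  have hSP : PMZ p S := ⟨Sper, Ssum⟩
  have hS'P : PMZ p (fun n => S (n+1)) := by
    refine ⟨fun n => by
      have := Sper (n+1)
      rw [show n+1+p = n+p+1 by ring] at this
      exact this, ?_⟩
    have a1 := Finset.sum_range_succ S p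
    rw [Finset.sum_range_succ'] at a1
    have := Sper 0
    rw [zero_add] at this
    rw [this, Ssum] at a1
    simpa using a1
  refine ⟨-S 0, fun n => - S (n+1), ⟨fun n => by simpa using hS'P.1 n, by simpa using hS'P.2⟩, ?_⟩
  intro f hf
  have hf1 : Summable (fun n => f (n+1)) := (summable_nat_add_iff 1).2 hf
  have s1 := sum_mul hp hSP hf
  have s2 := sum_mul hp hS'P hf
  have s3 := sum_mul hp hS'P hf1
  have e1 : ∑' n, ψ n * f n = ∑' n, S (n+1) * f n - ∑' n, S n * f n := by
    rw [← s2.tsum_sub s1]; congr 1; ext n; rw [← S1 n]; ring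
  have e2 : ∑' n, -S (n+1) * (f (n+1) - f n) = ∑' n, S (n+1) * f n - ∑' n, S (n+1) * f (n+1) := by
    rw [← s2.tsum_sub s3]; congr 1; ext n; ring
  rw [e1, e2, s1.tsum_eq_zero_add]
  ring

lemma DD_summable (M : ℕ) (f : ℝ → ℂ) (hf : Summable (fun n : ℕ => f ((n:ℝ)+1))) :
    Summable (fun n : ℕ => DD M f ((n:ℝ)+1)) := by
  induction M with
  | zero => exact hf
  | succ M ih =>
    have := ((summable_nat_add_iff 1).2 ih).sub ih
    simpa [DD] using this

lemma abel {p : ℕ} (hp : 0 < p) {ψ : ℕ → ℂ} (h : PMZ p ψ) (M : ℕ) :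
    ∃ (c : ℕ → ℂ) (T : ℕ → ℂ), PMZ p T ∧
    ∀ f : ℝ → ℂ, Summable (fun n : ℕ => f ((n:ℝ)+1)) → ∑' n : ℕ, ψ n * f ((n:ℝ)+1) =
      ∑ j ∈ Finset.range M, c j * DD j f 1 + ∑' n : ℕ, T n * DD M f ((n:ℝ)+1) := by
  induction M with
  | zero => exact ⟨0, ψ, h, fun f _ => by simp [DD]⟩
  | succ M ih =>
    obtain ⟨c, T, hT, H⟩ := ih
    obtain ⟨d, T', hT', H'⟩ := abel_step hp hT
    refine ⟨Function.update c M d, T', hT', fun f hf => ?_⟩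
    rw [H f hf, H' _ (DD_summable M f hf), Finset.sum_range_succ, ← add_assoc]
    congr 1
    · congr 1
      · refine Finset.sum_congr rfl fun j hj => ?_
        rw [Function.update_of_ne (Finset.mem_range.1 hj).ne]
      · simp
    · simp [DD]

lemma DD_diff (M : ℕ) (x : ℝ) (hx : 0 < x) (t : ℝ) :
    Differentiable ℂ (fun a => DD M (hh 0 a t) x) := by
  induction M generalizing x with
  | zero =>
    have hx' : (x:ℂ) ≠ 0 := by exact_mod_cast hx.ne'
    simp only [DD, hh]
    intro a
    refine (DifferentiableAt.mul (differentiableAt_id.const_cpow (Or.inl hx')) (by fun_prop)).const_mul _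
  | succ M ih => exact (ih (x+1) (by linarith)).sub (ih x hx)

lemma DD_cont (M : ℕ) (x : ℝ) (a : ℂ) : Continuous (fun t => DD M (hh 0 a t) x) := by
  induction M generalizing x with
  | zero => simp only [DD, hh]; fun_prop
  | succ M ih => exact (ih (x+1)).sub (ih x)

lemma limit {p : ℕ} (hp : 0 < p) {ψ : ℕ → ℂ} (h : PMZ p ψ) (L : ℂ → ℂ) (hL : Differentiable ℂ L)
    (hLs : ∀ s : ℂ, 1 < s.re → HasSum (fun n : ℕ => ψ n / ((n : ℂ) + 1) ^ s) (L s)) (m : ℕ) :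
    Filter.Tendsto (fun t : ℝ => ∑' n : ℕ, ψ n * hh 0 m t ((n:ℝ)+1)) (𝓝[>] 0) (𝓝 (L (-m))) := by
  obtain ⟨c, T, hT, H⟩ := abel hp h (m+3)
  obtain ⟨B, hB0, hB⟩ := hT.bdd hp
  obtain ⟨C, hC0, hC⟩ := DD_bound (m+3) 0 (m+3) (by positivity)
  have hs : Summable (fun n : ℕ => B * (C * ((n:ℝ)+1) ^ (-2:ℝ))) := by
    have := (summable_nat_add_iff 1).2 (Real.summable_nat_rpow.2 (show (-2:ℝ) < -1 by norm_num))
    refine Summable.mul_left _ (Summable.mul_left _ ?_)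
    simpa using this
  let U : Set ℂ := Metric.ball 0 (m+3) ∩ {a | a.re < m + 1}
  have hUo : IsOpen U := Metric.isOpen_ball.inter (isOpen_lt Complex.continuous_re continuous_const)
  have hUc : IsPreconnected U :=
    ((convex_ball _ _).inter (convex_halfSpace_re_lt _)).isPreconnected
  have hbd : ∀ a ∈ U, ∀ t : ℝ, 0 ≤ t → ∀ n : ℕ, ‖T n * DD (m+3) (hh 0 a t) ((n:ℝ)+1)‖ ≤
      B * (C * ((n:ℝ)+1) ^ (-2:ℝ)) := by
    intro a ha t ht n
    rw [norm_mul]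
    have hn : (0:ℝ) ≤ n := by positivity
    have ha1 : ‖a‖ ≤ m+3 := by simpa using (Metric.mem_ball.1 ha.1).le
    have ha2 : a.re < m+1 := ha.2
    refine mul_le_mul (hB n) ((hC a ha1 t ht _ (by linarith)).trans ?_) (norm_nonneg _) hB0
    gcongr
    · linarith
    · push_cast; linarith
  let G : ℝ → ℂ → ℂ := fun t a => ∑ j ∈ Finset.range (m+3), c j * DD j (hh 0 a t) 1 +
    ∑' n : ℕ, T n * DD (m+3) (hh 0 a t) ((n:ℝ)+1)
  have hmU : (m:ℂ) ∈ U := by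
    refine ⟨by simp, by simp⟩
  have hG0 : DifferentiableOn ℂ (G 0) U := by
    refine DifferentiableOn.add ?_ ?_
    · refine DifferentiableOn.fun_sum fun j _ => ?_
      exact ((DD_diff j 1 one_pos 0).const_mul _).differentiableOn
    · refine Complex.differentiableOn_tsum_of_summable_norm hs (fun n => ?_) hUo
        (fun n a ha => hbd a ha 0 le_rfl n)
      exact ((DD_diff _ _ (by positivity) 0).const_mul _).differentiableOn
  have hEq : Set.EqOn (G 0) (fun a => L (-a)) U := by
    refine AnalyticOnNhd.eqOn_of_preconnected_of_eventuallyEq (z₀ := -2) (hG0.analyticOnNhd hUo)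
      ((hL.comp differentiable_neg).differentiableOn.analyticOnNhd hUo) hUc ?_ ?_
    · have : (0:ℝ) ≤ m := by positivity
      refine ⟨?_, ?_⟩
      · simp; linarith
      · simp; linarith
    · have : {a : ℂ | a.re < -1} ∈ 𝓝 (-2:ℂ) :=
        (isOpen_lt Complex.continuous_re continuous_const).mem_nhds (by simp)
      filter_upwards [this] with a ha
      have ha' : a.re < -1 := ha
      have hn0 : ∀ n : ℕ, ((n:ℝ)+1) ≠ 0 := fun n => by positivity
      have hsum : Summable (fun n : ℕ => hh 0 a 0 ((n:ℝ)+1)) := by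
        have := (summable_nat_add_iff 1).2 (Real.summable_nat_rpow.2 ha')
        refine Summable.of_norm_bounded this fun n => ?_
        have := hh_norm 0 a 0 ((n:ℝ)+1) le_rfl (by positivity)
        simpa using this
      have h1 := H _ hsum
      have h2 := (hLs (-a) (by simp; linarith)).tsum_eq
      change _ = G 0 a at h1
      rw [← h1, ← h2]
      congr 1; ext n
      simp [hh, Complex.cpow_neg]
  rw [show L (-m) = G 0 m from (hEq hmU).symm]
  have hT0 : Filter.Tendsto (fun t => G t m) (𝓝[>] 0) (𝓝 (G 0 m)) := by
    refine Filter.Tendsto.add ?_ ?_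
    · refine tendsto_finsetSum _ fun j _ => ?_
      exact (((DD_cont j 1 m).tendsto 0).mono_left nhdsWithin_le_nhds).const_mul _
    · refine tendsto_tsum_of_dominated_convergence hs (fun n => ?_) ?_
      · exact (((DD_cont _ _ m).tendsto 0).mono_left nhdsWithin_le_nhds).const_mul _
      · filter_upwards [self_mem_nhdsWithin] with t ht n
        exact hbd m hmU t (le_of_lt ht) n
  refine hT0.congr' ?_
  filter_upwards [self_mem_nhdsWithin] with t ht
  exact (H _ (hh_summable m t ht)).symm

lemma taylor (N : ℕ) : ∀ (F : ℕ → ℝ → ℂ) (l : ℕ → ℂ),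
    (∀ k t, 0 < t → HasDerivAt (F k) (F (k+1) t) t) →
    (∀ k, Filter.Tendsto (F k) (𝓝[>] 0) (𝓝 (l k))) →
    (fun t : ℝ => F 0 t - ∑ k ∈ Finset.range N, l k * (t:ℂ)^k / (k.factorial : ℂ))
      =O[𝓝[>] (0:ℝ)] fun t : ℝ => t ^ N := by
  induction N with
  | zero => intro F l _ hl; simpa using (hl 0).isBigO_one ℝ
  | succ N ih =>
    intro F l hF hl
    have h1 := ih (fun k => F (k+1)) (fun k => l (k+1)) (fun k => hF (k+1)) (fun k => hl (k+1))
    obtain ⟨C, hC, hO⟩ := h1.exists_pos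
    rw [Asymptotics.isBigOWith_iff, eventually_nhdsWithin_iff, Metric.eventually_nhds_iff] at hO
    obtain ⟨δ, hδ, hO⟩ := hO
    set G : ℝ → ℂ := fun t => F 0 t - ∑ k ∈ Finset.range (N+1), l k * (t:ℂ)^k / (k.factorial : ℂ) with hG
    have hd : ∀ t : ℝ, 0 < t → HasDerivAt G (F 1 t - ∑ k ∈ Finset.range N, l (k+1) * (t:ℂ)^k / (k.factorial : ℂ)) t := by
      intro t ht
      refine (hF 0 t ht).sub ?_
      have : HasDerivAt (fun t : ℝ => ∑ k ∈ Finset.range (N+1), l k * (t:ℂ)^k / (k.factorial : ℂ))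
          (∑ k ∈ Finset.range (N+1), l k * (k * (t:ℂ)^(k-1)) / (k.factorial : ℂ)) t := by
        refine HasDerivAt.fun_sum fun k _ => ?_
        exact (((hasDerivAt_pow k (t:ℂ)).comp_ofReal).const_mul _).div_const _
      refine this.congr_deriv ?_
      rw [Finset.sum_range_succ']
      simp only [Nat.cast_zero, zero_mul, mul_zero, zero_div, add_zero]
      refine Finset.sum_congr rfl fun k _ => ?_
      have : (k.factorial : ℂ) ≠ 0 := by exact_mod_cast k.factorial_ne_zero
      have : (k:ℂ) + 1 ≠ 0 := by exact_mod_cast k.succ_ne_zero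
      rw [Nat.factorial_succ]; push_cast
      try simp only [Nat.add_sub_cancel]
      field_simp
    have hG0 : Filter.Tendsto G (𝓝[>] 0) (𝓝 0) := by
      have c : Continuous (fun t : ℝ => ∑ k ∈ Finset.range (N+1), l k * (t:ℂ)^k / (k.factorial : ℂ)) := by
        fun_prop
      have := (hl 0).sub ((c.tendsto 0).mono_left (nhdsWithin_le_nhds (s := Set.Ioi 0)))
      rw [Finset.sum_range_succ'] at this
      simpa [hG] using this
    refine Asymptotics.IsBigO.of_bound C ?_
    filter_upwards [Ioo_mem_nhdsGT hδ] with t ht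
    have hb : ∀ᶠ ε in 𝓝[>] (0:ℝ), ‖G t - G ε‖ ≤ C * t^N * t := by
      filter_upwards [Ioo_mem_nhdsGT ht.1] with ε hε
      have := (convex_Icc ε t).norm_image_sub_le_of_norm_hasDerivWithin_le (f := G)
        (C := C * t^N)
        (fun y hy => (hd y (hε.1.trans_le hy.1)).hasDerivWithinAt)
        (fun y hy => by
          have y0 : 0 < y := hε.1.trans_le hy.1
          refine (hO (y := y) (by
            rw [Real.dist_eq, sub_zero, abs_of_pos y0]; exact hy.2.trans_lt ht.2) y0).trans ?_
          rw [Real.norm_of_nonneg (by positivity)]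
          gcongr
          exact hy.2) (x := ε) (y := t) ⟨le_rfl, hε.2.le⟩ ⟨hε.2.le, le_rfl⟩
      refine this.trans ?_
      have h0 : 0 ≤ C * t^N := by have := ht.1; positivity
      gcongr
      rw [Real.norm_of_nonneg (by linarith [hε.2])]
      linarith [hε.1]
    have := le_of_tendsto ((hG0.const_sub (G t)).norm) hb
    rw [sub_zero] at this
    rw [Real.norm_of_nonneg (by have := ht.1; positivity), pow_succ, ← mul_assoc]
    exact this

lemma hh_anti (a : ℂ) (t u x : ℝ) (htu : t ≤ u) (hx : 0 < x) :
    ‖hh 0 a u x‖ ≤ ‖hh 0 a t x‖ := by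
  have e : ∀ v : ℝ, Complex.exp (-((v:ℂ) * (x:ℂ)^2)) = ((Real.exp (-(v*x^2)) : ℝ) : ℂ) := by
    intro v; push_cast; rfl
  simp only [hh, norm_mul, e, Complex.norm_real, Real.norm_of_nonneg (Real.exp_pos _).le,
    pow_zero, norm_one, one_mul]
  gcongr

lemma F_deriv {p : ℕ} (hp : 0 < p) {ψ : ℕ → ℂ} (h : PMZ p ψ) (m : ℕ) (t : ℝ) (ht : 0 < t) :
    HasDerivAt (fun t : ℝ => ∑' n : ℕ, ψ n * hh 0 m t ((n:ℝ)+1))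
      (-∑' n : ℕ, ψ n * hh 0 ((m+2 : ℕ)) t ((n:ℝ)+1)) t := by
  rw [← tsum_neg]
  refine hasDerivAt_tsum_of_isPreconnected (t := Set.Ioi (t/2)) (y₀ := t)
    (g := fun n t => ψ n * hh 0 m t ((n:ℝ)+1))
    (g' := fun n t => -(ψ n * hh 0 ((m+2 : ℕ)) t ((n:ℝ)+1)))
    (u := fun n => ‖ψ n * hh 0 ((m+2 : ℕ)) (t/2) ((n:ℝ)+1)‖)
    (sum_mul hp h (hh_summable _ (t/2) (by linarith))).norm isOpen_Ioi
    isPreconnected_Ioi ?_ ?_ ?_ ?_ ?_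
  · intro n y hy
    have h2 : HasDerivAt (fun z : ℂ => Complex.exp (-(z * (((n:ℝ)+1 : ℝ):ℂ)^2)))
      (Complex.exp (-((y:ℂ) * (((n:ℝ)+1 : ℝ):ℂ)^2)) * (-(1 * (((n:ℝ)+1 : ℝ):ℂ)^2))) (y:ℂ) :=
      (((hasDerivAt_id (y:ℂ)).mul_const _).neg).cexp
    have h3 := ((h2.comp_ofReal).const_mul ((((n:ℝ)+1 : ℝ):ℂ)^(m:ℂ))).const_mul (ψ n)
    simp only [hh, pow_zero, one_mul]
    refine h3.congr_deriv ?_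
    simp only [Complex.cpow_natCast]
    ring
  · intro n y hy
    rw [norm_neg, norm_mul, norm_mul]
    gcongr
    exact hh_anti _ _ _ _ (le_of_lt hy) (by positivity)
  · simpa using ht
  · exact sum_mul hp h (hh_summable _ t ht)
  · simpa using ht

theorem stmt_5 (p : ℕ) (hp : 0 < p) (χ : ℤ → ℂ)
    (hper : ∀ n : ℤ, χ (n + p) = χ n)
    (hmean : ∑ n ∈ Finset.Icc 1 p, χ (n : ℤ) = 0)
    (L : ℂ → ℂ) (hL : Differentiable ℂ L)
    (hLseries : ∀ s : ℂ, 1 < s.re →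
      HasSum (fun n : ℕ => χ ((n : ℤ) + 1) / ((n : ℂ) + 1) ^ s) (L s))
    (N : ℕ) :
    (fun t : ℝ =>
        (∑' n : ℕ, ((n : ℂ) + 1) * χ ((n : ℤ) + 1) *
            Complex.exp (-(((n : ℂ) + 1) ^ 2) * (t : ℂ)))
          - ∑ k ∈ Finset.range N, L (-2 * (k : ℂ) - 1) * (-(t : ℂ)) ^ k / (k.factorial : ℂ))
      =O[𝓝[>] (0 : ℝ)] fun t : ℝ => t ^ N := by
  set ψ : ℕ → ℂ := fun n => χ ((n:ℤ)+1) with hψ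
  have hP : PMZ p ψ := by
    refine ⟨fun n => ?_, ?_⟩
    · simp only [hψ]; rw [← hper ((n:ℤ)+1)]; congr 1; push_cast; ring
    · rw [← hmean, Finset.sum_bij (fun n _ => n + 1)]
      · intro a ha; simp at ha ⊢; omega
      · intro a _ b _ hab; omega
      · intro b hb
        simp at hb
        exact ⟨b - 1, by simp; omega, by omega⟩
      · intro a _; simp [hψ]
  have key := taylor N (fun k t => (-1)^k * ∑' n : ℕ, ψ n * hh 0 ((2*k+1 : ℕ)) t ((n:ℝ)+1))
    (fun k => (-1)^k * L (-((2*k+1 : ℕ) : ℂ)))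
    (fun k t ht => by
      refine ((F_deriv hp hP (2*k+1) t ht).const_mul ((-1)^k)).congr_deriv ?_
      rw [show 2*(k+1)+1 = 2*k+1+2 by ring, pow_succ]; ring)
    (fun k => (limit hp hP L hL hLseries (2*k+1)).const_mul _)
  refine key.congr_left fun t => ?_
  congr 1
  · simp only [pow_zero, one_mul]
    congr 1; ext n
    simp only [hh, hψ, Complex.cpow_natCast]
    push_cast
    rw [show -((t:ℂ) * ((n:ℂ)+1)^2) = -((n:ℂ)+1)^2 * t by ring]
    ring
  · refine Finset.sum_congr rfl fun k _ => ?_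
    rw [neg_pow (t:ℂ), show -((2*k+1 : ℕ) : ℂ) = -2 * (k:ℂ) - 1 by push_cast; ring]
    ring
end

section
/- For every complex number q with |q| < 1, the following identity of absolutely convergent series holds: Σ_{n=0}^∞ (n/2)·χ₂₀⁽⁰⁾(n)·q^{(n²−9)/40} = −Σ_{n=0}^∞ Σ_{c=0}^n ((q;q)_n − (q;q)_∞)·q^{c²+c}·[n choose c]_q + (q;q)_∞ · Σ_{c=0}^∞ (q^{c²+c}/(q;q)_c)·(3c + Σ_{i=1}^c q^i/(1−q^i)) + (q;q⁵)_∞·(q⁴;q⁵)_∞·(q⁵;q⁵)_∞ · (3/2 − Σ_{i=1}^∞ q^i/(1−q^i)). -/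
/-- The infinite q-Pochhammer symbol `(x;q)_∞ = ∏_{i=1}^∞ (1 - x q^{i-1})`. -/
noncomputable def qPochInf (q x : ℂ) : ℂ := ∏' i : ℕ, (1 - x * q ^ i)

open Filter Topology

namespace Stmt6

lemma qPoch_zero (q x : ℂ) : qPoch q x 0 = 1 := by simp [qPoch]

lemma qPoch_succ (q x : ℂ) (n : ℕ) : qPoch q x (n + 1) = qPoch q x n * (1 - x * q ^ n) := by
  simp [qPoch, Finset.prod_range_succ]

lemma qPoch_succ' (q x : ℂ) (n : ℕ) : qPoch q x (n + 1) = (1 - x) * qPoch q (x * q) n := by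
  simp only [qPoch, Finset.prod_range_succ', pow_zero, mul_one]
  rw [mul_comm]
  congr 1
  exact Finset.prod_congr rfl fun i _ => by ring

lemma qPoch_add (q x : ℂ) (n m : ℕ) :
    qPoch q x (n + m) = qPoch q x n * qPoch q (x * q ^ n) m := by
  simp only [qPoch, Finset.prod_range_add]
  congr 1
  exact Finset.prod_congr rfl fun i _ => by ring

lemma summable_norm_mul (q x : ℂ) (hq : ‖q‖ < 1) : Summable fun i : ℕ => ‖-(x * q ^ i)‖ := by
  simp only [norm_neg, norm_mul, norm_pow]
  exact (summable_geometric_of_lt_one (norm_nonneg q) hq).mul_left _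

lemma tendsto_qPoch (q x : ℂ) (hq : ‖q‖ < 1) :
    Tendsto (qPoch q x) atTop (𝓝 (qPochInf q x)) := by
  have h : Multipliable fun i : ℕ => (1 + -(x * q ^ i)) :=
    multipliable_one_add_of_summable (summable_norm_mul q x hq)
  have := h.hasProd.tendsto_prod_nat
  simpa only [← sub_eq_add_neg] using! this

lemma one_sub_ne_zero (q x : ℂ) (hq : ‖q‖ < 1) (hx : ‖x‖ < 1) (i : ℕ) : 1 - x * q ^ i ≠ 0 := by
  intro h
  have h1 : x * q ^ i = 1 := (sub_eq_zero.1 h).symm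
  have h2 : ‖x * q ^ i‖ < 1 := by
    rw [norm_mul, norm_pow]
    calc ‖x‖ * ‖q‖ ^ i ≤ ‖x‖ * 1 := by
          gcongr
          exact pow_le_one₀ (norm_nonneg _) hq.le
      _ < 1 := by simpa
  rw [h1] at h2
  simp at h2

lemma qPoch_ne_zero (q x : ℂ) (hq : ‖q‖ < 1) (hx : ‖x‖ < 1) (n : ℕ) : qPoch q x n ≠ 0 :=
  Finset.prod_ne_zero_iff.2 fun i _ => one_sub_ne_zero q x hq hx i

lemma qPochInf_ne_zero (q x : ℂ) (hq : ‖q‖ < 1) (hx : ‖x‖ < 1) : qPochInf q x ≠ 0 := by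
  have := tprod_one_add_ne_zero_of_summable (f := fun i : ℕ => -(x * q ^ i))
    (fun i => by simpa [← sub_eq_add_neg] using one_sub_ne_zero q x hq hx i)
    (summable_norm_mul q x hq)
  simpa only [← sub_eq_add_neg] using! this

lemma qPochInf_add (q x : ℂ) (hq : ‖q‖ < 1) (n : ℕ) :
    qPochInf q x = qPoch q x n * qPochInf q (x * q ^ n) := by
  have h1 := (tendsto_qPoch q x hq).comp (tendsto_add_atTop_nat n)
  have h2 := (tendsto_qPoch q (x * q ^ n) hq).const_mul (qPoch q x n)
  refine tendsto_nhds_unique h1 (h2.congr fun m => ?_)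
  simp only [Function.comp, ← qPoch_add]
  rw [add_comm]

/-- Uniform bound for the Pochhammer symbols. -/
noncomputable def MB (q : ℂ) : ℝ := Real.exp (∑' i : ℕ, ‖q‖ ^ i)

lemma MB_pos (q : ℂ) : 0 < MB q := Real.exp_pos _

lemma norm_qPoch_le (q x : ℂ) (hq : ‖q‖ < 1) (hx : ‖x‖ ≤ 1) (n : ℕ) : ‖qPoch q x n‖ ≤ MB q := by
  have h := Finset.norm_prod_one_add_sub_one_le (Finset.range n) (fun i : ℕ => -(x * q ^ i))
  have h2 : ∑ i ∈ Finset.range n, ‖-(x * q ^ i)‖ ≤ ∑' i : ℕ, ‖q‖ ^ i := by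
    calc _ ≤ ∑ i ∈ Finset.range n, ‖q‖ ^ i := by
          refine Finset.sum_le_sum fun i _ => ?_
          rw [norm_neg, norm_mul, norm_pow]
          exact mul_le_of_le_one_left (by positivity) hx
      _ ≤ _ := (summable_geometric_of_lt_one (norm_nonneg q) hq).sum_le_tsum _
          (fun i _ => by positivity)
  have h3 := Real.exp_le_exp.2 h2
  simp only [← sub_eq_add_neg] at h
  have h4 : ‖qPoch q x n‖ ≤ ‖qPoch q x n - 1‖ + 1 := by
    simpa using norm_add_le (qPoch q x n - 1) 1
  unfold MB
  unfold qPoch at *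
  linarith

lemma norm_qPochInf_le (q x : ℂ) (hq : ‖q‖ < 1) (hx : ‖x‖ ≤ 1) : ‖qPochInf q x‖ ≤ MB q :=
  le_of_tendsto (tendsto_qPoch q x hq).norm (Eventually.of_forall fun n => norm_qPoch_le q x hq hx n)

lemma norm_qPoch_sub_le (q x : ℂ) (hq : ‖q‖ < 1) (hx : ‖x‖ ≤ 1) (n : ℕ) :
    ‖qPoch q x n - qPochInf q x‖ ≤ MB q * ‖q‖ ^ n / (1 - ‖q‖) := by
  rw [← dist_eq_norm]
  refine dist_le_of_le_geometric_of_tendsto ‖q‖ (MB q) hq (fun n => ?_) (tendsto_qPoch q x hq) n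
  rw [dist_eq_norm, qPoch_succ]
  have : qPoch q x n - qPoch q x n * (1 - x * q ^ n) = qPoch q x n * (x * q ^ n) := by ring
  rw [this, norm_mul, norm_mul, norm_pow]
  gcongr
  · exact (MB_pos q).le
  · exact norm_qPoch_le q x hq hx n
  · exact mul_le_of_le_one_left (by positivity) hx

lemma exists_inv_bound (q : ℂ) (hq : ‖q‖ < 1) : ∃ C : ℝ, 0 < C ∧ ∀ n, ‖(qPoch q q n)⁻¹‖ ≤ C := by
  have h := (tendsto_qPoch q q hq).inv₀ (qPochInf_ne_zero q q hq hq)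
  obtain ⟨C, hC⟩ := (Metric.isBounded_range_of_tendsto _ h).exists_norm_le
  refine ⟨max C 1, by positivity, fun n => (hC _ ⟨n, rfl⟩).trans (le_max_left _ _)⟩

lemma exists_binom_bound (q : ℂ) (hq : ‖q‖ < 1) :
    ∃ C : ℝ, 0 < C ∧ ∀ n c, ‖qBinom q n c‖ ≤ C := by
  obtain ⟨C, hC, h⟩ := exists_inv_bound q hq
  refine ⟨MB q * (C * C), by have := MB_pos q; positivity, fun n c => ?_⟩
  have hM := MB_pos q
  unfold qBinom
  split_ifs
  · rw [div_eq_mul_inv, mul_inv, norm_mul, norm_mul]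
    gcongr
    · exact norm_qPoch_le q q hq hq.le n
    · exact h _
    · exact h _
  · simp; positivity

lemma qBinom_of_lt (q : ℂ) {n c : ℕ} (h : n < c) : qBinom q n c = 0 := by
  simp [qBinom, not_le.2 h]

lemma qBinom_zero_right (q : ℂ) (hq : ‖q‖ < 1) (n : ℕ) : qBinom q n 0 = 1 := by
  simp [qBinom, qPoch_zero, div_self (qPoch_ne_zero q q hq hq n)]

lemma qBinom_self (q : ℂ) (hq : ‖q‖ < 1) (n : ℕ) : qBinom q n n = 1 := by
  simp [qBinom, qPoch_zero, div_self (qPoch_ne_zero q q hq hq n)]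

lemma qBinom_symm (q : ℂ) {n c : ℕ} (h : c ≤ n) : qBinom q n (n - c) = qBinom q n c := by
  unfold qBinom
  rw [if_pos h, if_pos (Nat.sub_le n c), Nat.sub_sub_self h, mul_comm (qPoch q q c)]

lemma pascal1 (q : ℂ) (hq : ‖q‖ < 1) (n c : ℕ) :
    qBinom q (n + 1) (c + 1) = qBinom q n c + q ^ (c + 1) * qBinom q n (c + 1) := by
  rcases lt_trichotomy n c with h | h | h
  · rw [qBinom_of_lt q h, qBinom_of_lt q (by omega : n < c + 1),
      qBinom_of_lt q (by omega : n + 1 < c + 1)]; simp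
  · subst h
    rw [qBinom_self q hq, qBinom_self q hq, qBinom_of_lt q (by omega : n < n + 1)]; simp
  · obtain ⟨m, rfl⟩ : ∃ m, n = c + 1 + m := ⟨n - (c + 1), by omega⟩
    unfold qBinom
    rw [if_pos (by omega), if_pos (by omega), if_pos (by omega),
      show c + 1 + m + 1 - (c + 1) = m + 1 by omega, show c + 1 + m - c = m + 1 by omega,
      show c + 1 + m - (c + 1) = m by omega, qPoch_succ q q (c + 1 + m), qPoch_succ q q m,
      qPoch_succ q q c]
    have h1 := qPoch_ne_zero q q hq hq c
    have h2 := qPoch_ne_zero q q hq hq m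
    have h3 := one_sub_ne_zero q q hq hq c
    have h4 := one_sub_ne_zero q q hq hq m
    field_simp
    ring

lemma pascal2 (q : ℂ) (hq : ‖q‖ < 1) (n c : ℕ) :
    qBinom q (n + 1) (c + 1) = q ^ (n - c) * qBinom q n c + qBinom q n (c + 1) := by
  rcases lt_trichotomy n c with h | h | h
  · rw [qBinom_of_lt q h, qBinom_of_lt q (by omega : n < c + 1),
      qBinom_of_lt q (by omega : n + 1 < c + 1)]; simp
  · subst h
    rw [qBinom_self q hq, qBinom_self q hq, qBinom_of_lt q (by omega : n < n + 1)]; simp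
  · obtain ⟨m, rfl⟩ : ∃ m, n = c + 1 + m := ⟨n - (c + 1), by omega⟩
    unfold qBinom
    rw [if_pos (by omega), if_pos (by omega), if_pos (by omega),
      show c + 1 + m + 1 - (c + 1) = m + 1 by omega, show c + 1 + m - c = m + 1 by omega,
      show c + 1 + m - (c + 1) = m by omega, qPoch_succ q q (c + 1 + m), qPoch_succ q q m,
      qPoch_succ q q c]
    have h1 := qPoch_ne_zero q q hq hq c
    have h2 := qPoch_ne_zero q q hq hq m
    have h3 := one_sub_ne_zero q q hq hq c
    have h4 := one_sub_ne_zero q q hq hq m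
    field_simp
    ring


/-- The polynomials `A_n(x) = ∑_c q^{c²+c} x^{2c} [n choose c]`. -/
noncomputable def AA (q : ℂ) (n : ℕ) (x : ℂ) : ℂ :=
  ∑ c ∈ Finset.range (n + 1), q ^ (c ^ 2 + c) * x ^ (2 * c) * qBinom q n c

/-- Companion polynomials. -/
noncomputable def QQ (q : ℂ) (n : ℕ) (x : ℂ) : ℂ :=
  ∑ c ∈ Finset.range (n + 1), q ^ (c ^ 2 + 2 * c) * x ^ (2 * c) * qBinom q n c

lemma AA_zero (q : ℂ) (hq : ‖q‖ < 1) (x : ℂ) : AA q 0 x = 1 := by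
  simp [AA, qBinom_self q hq]

lemma AA_ext (q : ℂ) (n : ℕ) (x : ℂ) :
    AA q n x = ∑ c ∈ Finset.range (n + 2), q ^ (c ^ 2 + c) * x ^ (2 * c) * qBinom q n c := by
  rw [Finset.sum_range_succ _ (n + 1), qBinom_of_lt q (by omega : n < n + 1)]
  simp [AA]

lemma QQ_ext (q : ℂ) (n : ℕ) (x : ℂ) :
    QQ q n x = ∑ c ∈ Finset.range (n + 2), q ^ (c ^ 2 + 2 * c) * x ^ (2 * c) * qBinom q n c := by
  rw [Finset.sum_range_succ _ (n + 1), qBinom_of_lt q (by omega : n < n + 1)]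
  simp [QQ]

lemma AA_rec1 (q : ℂ) (hq : ‖q‖ < 1) (n : ℕ) (x : ℂ) :
    AA q (n + 1) x = AA q n x + x ^ 2 * q ^ (n + 2) * QQ q n x := by
  rw [AA_ext q n x, AA, QQ, Finset.mul_sum, Finset.sum_range_succ' _ (n + 1),
    Finset.sum_range_succ' _ (n + 1), add_right_comm, ← Finset.sum_add_distrib,
    qBinom_zero_right q hq, qBinom_zero_right q hq]
  congr 1
  refine Finset.sum_congr rfl fun c hc => ?_
  have hc' : c ≤ n := by simpa [Nat.lt_succ_iff] using hc
  rw [pascal2 q hq]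
  obtain ⟨m, rfl⟩ := Nat.exists_eq_add_of_le hc'
  rw [Nat.add_sub_cancel_left]
  ring

lemma AA_rec2 (q : ℂ) (hq : ‖q‖ < 1) (n : ℕ) (x : ℂ) :
    AA q (n + 1) x = QQ q n x + x ^ 2 * q ^ 2 * AA q n (x * q) := by
  rw [QQ_ext q n x, AA, AA, Finset.mul_sum, Finset.sum_range_succ' _ (n + 1),
    Finset.sum_range_succ' _ (n + 1), add_right_comm, ← Finset.sum_add_distrib,
    qBinom_zero_right q hq, qBinom_zero_right q hq]
  congr 1
  refine Finset.sum_congr rfl fun c hc => ?_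
  rw [pascal1 q hq]
  ring

lemma AA_bound (q : ℂ) (hq : ‖q‖ < 1) (ρ : ℝ) (h0 : 0 ≤ ρ) (h1 : ρ < 1) :
    ∃ C : ℝ, 0 < C ∧ ∀ n x, ‖x‖ ^ 2 * ‖q‖ ≤ ρ → ‖AA q n x‖ ≤ C := by
  obtain ⟨C, hC, h⟩ := exists_binom_bound q hq
  have hs := summable_geometric_of_lt_one h0 h1
  refine ⟨(1 - ρ)⁻¹ * C, by have : 0 < 1 - ρ := by linarith
                            positivity, fun n x hx => ?_⟩
  rw [← tsum_geometric_of_lt_one h0 h1]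
  calc ‖AA q n x‖ ≤ ∑ c ∈ Finset.range (n + 1), ρ ^ c * C := by
        refine norm_sum_le_of_le _ fun c _ => ?_
        rw [norm_mul, norm_mul, norm_pow, norm_pow]
        gcongr
        · calc ‖q‖ ^ (c ^ 2 + c) * ‖x‖ ^ (2 * c) ≤ ‖q‖ ^ c * ‖x‖ ^ (2 * c) := by
                refine mul_le_mul_of_nonneg_right ?_ (by positivity)
                exact pow_le_pow_of_le_one (norm_nonneg _) hq.le (Nat.le_add_left c (c ^ 2))
            _ = (‖x‖ ^ 2 * ‖q‖) ^ c := by rw [mul_pow, ← pow_mul, mul_comm]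
            _ ≤ ρ ^ c := by gcongr
        · exact h n c
    _ = (∑ c ∈ Finset.range (n + 1), ρ ^ c) * C := by rw [Finset.sum_mul]
    _ ≤ _ := by
        gcongr
        exact hs.sum_le_tsum _ (fun i _ => by positivity)

/-- Telescoping function. -/
noncomputable def UU (q : ℂ) (n : ℕ) (x : ℂ) : ℂ :=
  qPoch q (x * q) n * x ^ n * (x ^ 2 * q ^ (n + 1) - 1) * AA q n x

/-- Terms of the series `H`. -/
noncomputable def hh (q : ℂ) (n : ℕ) (x : ℂ) : ℂ := qPoch q x (n + 1) * x ^ n * AA q n x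

lemma telescope (q : ℂ) (hq : ‖q‖ < 1) (n : ℕ) (x : ℂ) :
    hh q n x + q ^ 4 * x ^ 5 * hh q n (x * q) = UU q (n + 1) x - UU q n x := by
  have e1 := AA_rec1 q hq n x
  have e2 := AA_rec2 q hq n x
  unfold hh UU
  rw [qPoch_succ' q x n, qPoch_succ q (x * q) n]
  linear_combination (qPoch q (x * q) n * x ^ n * (1 - x * q ^ (n + 1)) * x) * e1 -
    (qPoch q (x * q) n * x ^ n * (1 - x * q ^ (n + 1)) * x ^ 3 * q ^ (n + 2)) * e2

lemma hh_bound (q : ℂ) (hq : ‖q‖ < 1) :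
    ∃ C : ℝ, 0 < C ∧ ∀ n x, ‖x‖ ≤ 1 → ‖hh q n x‖ ≤ C * ‖x‖ ^ n := by
  obtain ⟨C, hC, h⟩ := AA_bound q hq ‖q‖ (norm_nonneg _) hq
  have := MB_pos q
  refine ⟨MB q * C, by positivity, fun n x hx => ?_⟩
  rw [hh, norm_mul, norm_mul, norm_pow, mul_right_comm]
  gcongr
  · exact norm_qPoch_le q x hq hx _
  · exact h n x (mul_le_of_le_one_left (norm_nonneg _) (pow_le_one₀ (norm_nonneg _) hx))

lemma tendsto_UU (q : ℂ) (hq : ‖q‖ < 1) (x : ℂ) (hx : ‖x‖ < 1) :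
    Tendsto (fun n => UU q n x) atTop (𝓝 0) := by
  obtain ⟨C, hC, h⟩ := AA_bound q hq ‖q‖ (norm_nonneg _) hq
  have hM := MB_pos q
  have ht : Tendsto (fun n : ℕ => MB q * ‖x‖ ^ n * 2 * C) atTop (𝓝 0) := by
    have := (((tendsto_pow_atTop_nhds_zero_of_lt_one (norm_nonneg x) hx).const_mul
      (MB q)).mul_const 2).mul_const C
    simpa using this
  refine squeeze_zero_norm (fun n => ?_) ht
  rw [UU, norm_mul, norm_mul, norm_mul, norm_pow]
  gcongr
  · apply norm_qPoch_le q _ hq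
    rw [norm_mul]
    exact mul_le_one₀ hx.le (norm_nonneg _) hq.le
  · refine (norm_sub_le _ _).trans ?_
    rw [norm_mul, norm_pow, norm_pow, norm_one]
    have : ‖x‖ ^ 2 * ‖q‖ ^ (n + 1) ≤ 1 :=
      mul_le_one₀ (pow_le_one₀ (norm_nonneg _) hx.le) (by positivity)
        (pow_le_one₀ (norm_nonneg _) hq.le)
    linarith
  · exact h n x (mul_le_of_le_one_left (norm_nonneg _) (pow_le_one₀ (norm_nonneg _) hx.le))

/-- The series `H(x)`. -/
noncomputable def HH (q x : ℂ) : ℂ := ∑' n, hh q n x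

lemma summable_hh (q : ℂ) (hq : ‖q‖ < 1) (x : ℂ) (hx : ‖x‖ < 1) :
    Summable fun n => hh q n x := by
  obtain ⟨C, hC, h⟩ := hh_bound q hq
  exact ((summable_geometric_of_lt_one (norm_nonneg x) hx).mul_left C).of_norm_bounded
    (fun n => h n x hx.le)

lemma norm_mul_lt (q x : ℂ) (hq : ‖q‖ < 1) (hx : ‖x‖ < 1) : ‖x * q‖ < 1 := by
  rw [norm_mul]
  exact mul_lt_one_of_nonneg_of_lt_one_left (norm_nonneg _) hx hq.le

lemma HH_bound (q : ℂ) (hq : ‖q‖ < 1) :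
    ∃ C : ℝ, 0 < C ∧ ∀ x, ‖x‖ < 1 → ‖HH q x‖ ≤ C / (1 - ‖x‖) := by
  obtain ⟨C, hC, h⟩ := hh_bound q hq
  refine ⟨C, hC, fun x hx => ?_⟩
  have := (hasSum_geometric_of_lt_one (norm_nonneg x) hx).mul_left C
  exact tsum_of_norm_bounded this (fun n => h n x hx.le)

lemma HH_rec (q : ℂ) (hq : ‖q‖ < 1) (x : ℂ) (hx : ‖x‖ < 1) :
    HH q x = 1 - x ^ 2 * q - q ^ 4 * x ^ 5 * HH q (x * q) := by
  have s1 := (summable_hh q hq x hx).hasSum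
  have s2 := (summable_hh q hq (x * q) (norm_mul_lt q x hq hx)).hasSum.mul_left (q ^ 4 * x ^ 5)
  have s3 := (s1.add s2).tendsto_sum_nat
  have s4 : Tendsto (fun N => UU q N x - UU q 0 x) atTop (𝓝 (0 - UU q 0 x)) :=
    (tendsto_UU q hq x hx).sub_const _
  have s5 := tendsto_nhds_unique s3 (s4.congr fun N => by
    rw [← Finset.sum_range_sub (fun n => UU q n x)]
    exact Finset.sum_congr rfl fun n _ => (telescope q hq n x).symm)
  have : UU q 0 x = x ^ 2 * q - 1 := by simp [UU, qPoch_zero, AA_zero q hq]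
  rw [this] at s5
  unfold HH
  linear_combination s5

/-- The exponent `(5k²+3k)/2`. -/
def ee (k : ℕ) : ℕ := (5 * k ^ 2 + 3 * k) / 2

lemma ee_succ (k : ℕ) : ee (k + 1) = ee k + (5 * k + 4) := by
  unfold ee
  rw [show 5 * (k + 1) ^ 2 + 3 * (k + 1) = 5 * k ^ 2 + 3 * k + (5 * k + 4) * 2 by ring,
    Nat.add_mul_div_right _ _ (by norm_num)]

lemma ee_zero : ee 0 = 0 := rfl

lemma le_ee (k : ℕ) : 4 * k ≤ ee k := by
  induction k with
  | zero => simp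
  | succ k ih => rw [ee_succ]; omega

lemma two_ee (k : ℕ) : 2 * ee k = 5 * k ^ 2 + 3 * k := by
  induction k with
  | zero => rfl
  | succ k ih => rw [ee_succ, mul_add, ih]; ring

/-- Terms of the partial theta function. -/
noncomputable def ff (q : ℂ) (k : ℕ) (x : ℂ) : ℂ :=
  (-1) ^ k * q ^ ee k * x ^ (5 * k) * (1 - x ^ 2 * q ^ (2 * k + 1))

lemma norm_mul_pow_le (q x : ℂ) (hq : ‖q‖ < 1) (k : ℕ) : ‖x * q ^ k‖ ≤ ‖x‖ := by
  rw [norm_mul, norm_pow]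
  exact mul_le_of_le_one_right (norm_nonneg _) (pow_le_one₀ (norm_nonneg _) hq.le)

lemma HH_iter (q : ℂ) (hq : ‖q‖ < 1) (x : ℂ) (hx : ‖x‖ < 1) (K : ℕ) :
    HH q x = ∑ k ∈ Finset.range K, ff q k x
      + (-1) ^ K * q ^ ee K * x ^ (5 * K) * HH q (x * q ^ K) := by
  induction K with
  | zero => simp [ee_zero]
  | succ K ih =>
    rw [ih, Finset.sum_range_succ, HH_rec q hq (x * q ^ K) ((norm_mul_pow_le q x hq K).trans_lt hx),
      ee_succ, ff, show x * q ^ K * q = x * q ^ (K + 1) by ring]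
    ring

lemma tendsto_ff (q : ℂ) (hq : ‖q‖ < 1) (x : ℂ) (hx : ‖x‖ < 1) :
    Tendsto (fun K => ∑ k ∈ Finset.range K, ff q k x) atTop (𝓝 (HH q x)) := by
  obtain ⟨C, hC, h⟩ := HH_bound q hq
  have hx' : 0 < 1 - ‖x‖ := by linarith
  have h0 : Tendsto (fun K => (-1) ^ K * q ^ ee K * x ^ (5 * K) * HH q (x * q ^ K)) atTop
      (𝓝 0) := by
    have ht : Tendsto (fun K : ℕ => ‖x‖ ^ K * (C / (1 - ‖x‖))) atTop (𝓝 0) := by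
      simpa using (tendsto_pow_atTop_nhds_zero_of_lt_one (norm_nonneg x) hx).mul_const
        (C / (1 - ‖x‖))
    refine squeeze_zero_norm (fun K => ?_) ht
    rw [norm_mul]
    gcongr
    · rw [norm_mul, norm_mul, norm_pow, norm_pow, norm_pow, norm_neg, norm_one, one_pow, one_mul]
      calc ‖q‖ ^ ee K * ‖x‖ ^ (5 * K) ≤ 1 * ‖x‖ ^ K := by
            gcongr ?_ * ?_
            · exact pow_le_one₀ (norm_nonneg _) hq.le
            · exact pow_le_pow_of_le_one (norm_nonneg _) hx.le (by omega)
        _ = ‖x‖ ^ K := one_mul _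
    · have hn := norm_mul_pow_le q x hq K
      refine (h _ (hn.trans_lt hx)).trans ?_
      gcongr
  have h1 := (tendsto_const_nhds (x := HH q x) (f := atTop (α := ℕ))).sub h0
  rw [sub_zero] at h1
  refine h1.congr fun K => ?_
  rw [HH_iter q hq x hx K]
  ring


/-- `K(x) = (xq;q)_∞`. -/
noncomputable def KK (q x : ℂ) : ℂ := qPochInf q (x * q)

lemma KK_eq (q : ℂ) : KK q = fun x => ∏' i : ℕ, (1 + -(x * q * q ^ i)) := by
  funext x
  simp only [KK, qPochInf, sub_eq_add_neg]

lemma KK_loc (q : ℂ) (hq : ‖q‖ < 1) (R : ℝ) :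
    HasProdLocallyUniformlyOn (fun (i : ℕ) (x : ℂ) => 1 + -(x * q * q ^ i))
      (fun x => ∏' i : ℕ, (1 + -(x * q * q ^ i))) (Metric.ball 0 R) := by
  refine Summable.hasProdLocallyUniformlyOn_nat_one_add Metric.isOpen_ball (u := fun i => R * ‖q‖ ^ i)
    ((summable_geometric_of_lt_one (norm_nonneg q) hq).mul_left _)
    (Eventually.of_forall fun i x hx => ?_) (fun i => by fun_prop)
  rw [mem_ball_zero_iff] at hx
  rw [norm_neg, norm_mul, norm_mul, norm_pow]
  gcongr
  exact (mul_le_of_le_one_right (norm_nonneg _) hq.le).trans hx.le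

lemma KK_diff (q : ℂ) (hq : ‖q‖ < 1) : Differentiable ℂ (KK q) := by
  intro x
  have h := (hasProdLocallyUniformlyOn_iff_tendstoLocallyUniformlyOn.1
    (KK_loc q hq (‖x‖ + 1))).differentiableOn
    (Eventually.of_forall fun s => by fun_prop) Metric.isOpen_ball
  rw [← KK_eq] at h
  exact h.differentiableAt (Metric.isOpen_ball.mem_nhds (by simp))

lemma lambert_bound (q y : ℂ) (hq : ‖q‖ < 1) (hy : ‖y‖ ≤ 1) (i : ℕ) :
    ‖q ^ (i + 1) / (1 - y * q ^ (i + 1))‖ ≤ (1 - ‖q‖)⁻¹ * ‖q‖ ^ i := by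
  have h0 : 0 < 1 - ‖q‖ := by linarith
  have h1 : 1 - ‖q‖ ≤ ‖1 - y * q ^ (i + 1)‖ := by
    have h2 := norm_sub_norm_le (1 : ℂ) (y * q ^ (i + 1))
    have h3 : ‖y * q ^ (i + 1)‖ ≤ ‖q‖ := by
      rw [norm_mul, norm_pow]
      calc ‖y‖ * ‖q‖ ^ (i + 1) ≤ 1 * ‖q‖ ^ 1 := by
            gcongr ?_ * ?_
            exact pow_le_pow_of_le_one (norm_nonneg _) hq.le (by omega)
        _ = ‖q‖ := by simp
    rw [norm_one] at h2
    linarith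
  rw [norm_div, div_eq_inv_mul, norm_pow]
  gcongr ?_ * ?_
  · exact inv_anti₀ h0 h1
  · exact pow_le_pow_of_le_one (norm_nonneg _) hq.le (by omega)

lemma summable_lambert (q y : ℂ) (hq : ‖q‖ < 1) (hy : ‖y‖ ≤ 1) :
    Summable fun i : ℕ => q ^ (i + 1) / (1 - y * q ^ (i + 1)) :=
  ((summable_geometric_of_lt_one (norm_nonneg q) hq).mul_left _).of_norm_bounded
    (lambert_bound q y hq hy)

lemma KK_deriv (q y : ℂ) (hq : ‖q‖ < 1) (hy : ‖y‖ ≤ 1) :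
    deriv (KK q) y = - KK q y * ∑' i : ℕ, q ^ (i + 1) / (1 - y * q ^ (i + 1)) := by
  have hyq : ‖y * q‖ < 1 := by
    rw [norm_mul]
    exact mul_lt_one_of_nonneg_of_lt_one_right hy (norm_nonneg _) hq
  have hK : KK q y ≠ 0 := qPochInf_ne_zero q _ hq hyq
  have hl : ∀ i : ℕ, logDeriv (fun x : ℂ => 1 + -(x * q * q ^ i)) y
      = -(q ^ (i + 1) / (1 - y * q ^ (i + 1))) := by
    intro i
    have hd : HasDerivAt (fun x : ℂ => 1 + -(x * q * q ^ i)) (-(1 * q * q ^ i)) y :=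
      ((((hasDerivAt_id y).mul_const q).mul_const (q ^ i)).neg).const_add 1
    rw [logDeriv_apply, hd.deriv]
    rw [show 1 + -(y * q * q ^ i) = 1 - y * q ^ (i + 1) by ring]
    ring
  have h := logDeriv_tprod_eq_tsum (Metric.isOpen_ball (x := (0 : ℂ)) (ε := 2)) (x := y)
    (by rw [mem_ball_zero_iff]; linarith) (f := fun (i : ℕ) (x : ℂ) => 1 + -(x * q * q ^ i))
    (fun i => by simpa [← sub_eq_add_neg] using one_sub_ne_zero q (y * q) hq hyq i)
    (fun i => by fun_prop)
    (by simp only [hl]; exact (summable_lambert q y hq hy).neg)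
    (KK_loc q hq 2).multipliableLocallyUniformlyOn
    (by have := hK; rw [KK_eq] at this; exact this)
  rw [← KK_eq] at h
  simp only [hl] at h
  rw [tsum_neg, logDeriv_apply, div_eq_iff hK] at h
  rw [h]; ring

lemma sum_Icc_eq (f : ℕ → ℂ) (c : ℕ) :
    ∑ i ∈ Finset.Icc 1 c, f i = ∑ i ∈ Finset.range c, f (i + 1) := by
  induction c with
  | zero => simp
  | succ c ih => rw [Finset.sum_Icc_succ_top (by omega), ih, Finset.sum_range_succ]

/-- Terms of the second series. -/
noncomputable def g2 (q : ℂ) (c : ℕ) (x : ℂ) : ℂ :=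
  q ^ (c ^ 2 + c) * x ^ (3 * c) * KK q (x * q ^ c)

lemma KK_pow (q : ℂ) (hq : ‖q‖ < 1) (c : ℕ) :
    KK q (q ^ c) = qPochInf q q / qPoch q q c := by
  rw [eq_div_iff (qPoch_ne_zero q q hq hq c), qPochInf_add q q hq c, KK,
    mul_comm (qPoch q q c), mul_comm q]

lemma g2_deriv (q : ℂ) (hq : ‖q‖ < 1) (c : ℕ) :
    deriv (g2 q c) 1 = qPochInf q q * (q ^ (c ^ 2 + c) / qPoch q q c *
      (3 * (c : ℂ) + ∑ i ∈ Finset.Icc 1 c, q ^ i / (1 - q ^ i)))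
      - (∑' i : ℕ, q ^ (i + 1) / (1 - q ^ (i + 1))) * g2 q c 1 := by
  have hy : ‖q ^ c‖ ≤ 1 := by rw [norm_pow]; exact pow_le_one₀ (norm_nonneg _) hq.le
  have hK : HasDerivAt (KK q) (deriv (KK q) (1 * q ^ c)) (1 * q ^ c) :=
    (KK_diff q hq _).hasDerivAt
  have h1 : HasDerivAt (fun x : ℂ => x * q ^ c) (1 * q ^ c) 1 :=
    (hasDerivAt_id (1 : ℂ)).mul_const (q ^ c)
  have h2 : HasDerivAt (fun x : ℂ => KK q (x * q ^ c)) _ 1 :=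
    HasDerivAt.comp (h₂ := KK q) (h := fun x : ℂ => x * q ^ c) (1 : ℂ) hK h1
  have h3 := ((hasDerivAt_pow (3 * c) (1 : ℂ)).const_mul (q ^ (c ^ 2 + c))).mul h2
  have h4 : deriv (g2 q c) 1 = _ := h3.deriv
  have hs : Summable fun i : ℕ => q ^ (i + 1) / (1 - q ^ (i + 1)) := by
    simpa using summable_lambert q 1 hq (by simp)
  have h5 := hs.sum_add_tsum_nat_add c
  have h6 : q ^ c * ∑' i : ℕ, q ^ (i + 1) / (1 - q ^ c * q ^ (i + 1))
      = ∑' i : ℕ, q ^ (i + c + 1) / (1 - q ^ (i + c + 1)) := by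
    rw [← tsum_mul_left]
    refine tsum_congr fun i => ?_
    rw [show q ^ (i + c + 1) = q ^ c * q ^ (i + 1) by ring]
    ring
  rw [h4, sum_Icc_eq (fun i => q ^ i / (1 - q ^ i)), ← h5, ← h6, g2]
  simp only [one_mul, one_pow, mul_one]
  rw [KK_deriv q _ hq hy, KK_pow q hq]
  push_cast
  ring

lemma g2_one (q : ℂ) (c : ℕ) : g2 q c 1 = q ^ (c ^ 2 + c) * KK q (q ^ c) := by
  simp [g2]

lemma g2_bound (q : ℂ) (hq : ‖q‖ < 1) (r : ℝ) (hr : 1 < r) (hrq : r ^ 3 * ‖q‖ < 1) (c : ℕ) (x : ℂ)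
    (hx : x ∈ Metric.ball (0 : ℂ) r) : ‖g2 q c x‖ ≤ MB q * (r ^ 3 * ‖q‖) ^ c := by
  rw [mem_ball_zero_iff] at hx
  have hM := MB_pos q
  have hxr : ‖x‖ * ‖q‖ ≤ 1 := by
    have : r ≤ r ^ 3 := le_self_pow₀ hr.le (by norm_num)
    calc ‖x‖ * ‖q‖ ≤ r ^ 3 * ‖q‖ := by gcongr; linarith
      _ ≤ 1 := hrq.le
  rw [g2, norm_mul, norm_mul, norm_pow, norm_pow, mul_comm]
  gcongr ?_ * ?_
  · refine norm_qPochInf_le q _ hq ?_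
    rw [show x * q ^ c * q = (x * q) * q ^ c by ring]
    refine (norm_mul_pow_le q _ hq c).trans ?_
    rwa [norm_mul]
  · calc ‖q‖ ^ (c ^ 2 + c) * ‖x‖ ^ (3 * c) ≤ ‖q‖ ^ c * r ^ (3 * c) := by
          gcongr ?_ * ?_
          · exact pow_le_pow_of_le_one (norm_nonneg _) hq.le (Nat.le_add_left c (c ^ 2))
          · exact pow_le_pow_left₀ (norm_nonneg _) hx.le _
      _ = (r ^ 3 * ‖q‖) ^ c := by rw [mul_pow, ← pow_mul, mul_comm]

/-- Terms of the first series. -/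
noncomputable def g1 (q : ℂ) (n : ℕ) (x : ℂ) : ℂ :=
  (qPoch q (x * q) n - KK q x) * x ^ n * AA q n x

lemma g1_bound (q : ℂ) (hq : ‖q‖ < 1) (r : ℝ) (hr : 1 < r) (hrq : r ^ 3 * ‖q‖ < 1) :
    ∃ C : ℝ, ∀ n, ∀ x ∈ Metric.ball (0 : ℂ) r, ‖g1 q n x‖ ≤ C * (r ^ 3 * ‖q‖) ^ n := by
  have h0 : 0 ≤ r ^ 3 * ‖q‖ := by positivity
  obtain ⟨C, hC, h⟩ := AA_bound q hq (r ^ 3 * ‖q‖) h0 hrq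
  have hM := MB_pos q
  have h1q : 0 < 1 - ‖q‖ := by linarith
  have hr3 : r ≤ r ^ 3 := le_self_pow₀ hr.le (by norm_num)
  refine ⟨MB q / (1 - ‖q‖) * C, fun n x hx => ?_⟩
  rw [mem_ball_zero_iff] at hx
  have hxr : ‖x * q‖ ≤ 1 := by
    rw [norm_mul]
    calc ‖x‖ * ‖q‖ ≤ r ^ 3 * ‖q‖ := by gcongr; linarith
      _ ≤ 1 := hrq.le
  have hA : ‖AA q n x‖ ≤ C := by
    refine h n x ?_
    gcongr
    calc ‖x‖ ^ 2 ≤ r ^ 2 := by gcongr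
      _ ≤ r ^ 3 := pow_le_pow_right₀ hr.le (by norm_num)
  rw [g1, norm_mul, norm_mul, norm_pow]
  calc _ ≤ (MB q * ‖q‖ ^ n / (1 - ‖q‖)) * (r ^ 3) ^ n * C := by
        gcongr
        · exact norm_qPoch_sub_le q _ hq hxr n
        · linarith
    _ = _ := by rw [mul_pow]; ring

lemma AA_diff (q : ℂ) (n : ℕ) : Differentiable ℂ (AA q n) := by
  unfold AA
  fun_prop

lemma qPoch_diff (q : ℂ) (n : ℕ) : Differentiable ℂ (fun x => qPoch q (x * q) n) := by
  unfold qPoch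
  fun_prop

lemma g1_diff (q : ℂ) (hq : ‖q‖ < 1) (n : ℕ) : Differentiable ℂ (g1 q n) := by
  have h1 := qPoch_diff q n
  have h2 := AA_diff q n
  have h3 := KK_diff q hq
  unfold g1
  fun_prop

lemma g2_diff (q : ℂ) (hq : ‖q‖ < 1) (c : ℕ) : Differentiable ℂ (g2 q c) := by
  have h3 := KK_diff q hq
  unfold g2
  fun_prop

lemma ff_diff (q : ℂ) (k : ℕ) : Differentiable ℂ (ff q k) := by
  unfold ff
  fun_prop

lemma ff_bound (q : ℂ) (hq : ‖q‖ < 1) (r : ℝ) (hr : 1 < r) (hrq : r ^ 3 * ‖q‖ < 1) (k : ℕ) (x : ℂ)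
    (hx : x ∈ Metric.ball (0 : ℂ) r) : ‖ff q k x‖ ≤ (r ^ 3 * ‖q‖) ^ k * 2 := by
  rw [mem_ball_zero_iff] at hx
  have h0 : 0 ≤ r ^ 3 * ‖q‖ := by positivity
  rw [ff, norm_mul, norm_mul, norm_mul, norm_pow, norm_pow, norm_pow, norm_neg, norm_one, one_pow,
    one_mul]
  gcongr ?_ * ?_
  · calc ‖q‖ ^ ee k * ‖x‖ ^ (5 * k) ≤ ‖q‖ ^ (2 * k) * r ^ (6 * k) := by
          gcongr ?_ * ?_
          · exact pow_le_pow_of_le_one (norm_nonneg _) hq.le (by have := le_ee k; omega)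
          · calc ‖x‖ ^ (5 * k) ≤ r ^ (5 * k) := by gcongr
              _ ≤ r ^ (6 * k) := pow_le_pow_right₀ hr.le (by omega)
      _ = (r ^ 3 * ‖q‖) ^ (2 * k) := by rw [mul_pow, ← pow_mul, mul_comm]; congr 2; ring
      _ ≤ (r ^ 3 * ‖q‖) ^ k := pow_le_pow_of_le_one h0 hrq.le (by omega)
  · refine (norm_sub_le _ _).trans ?_
    rw [norm_one, norm_mul, norm_pow, norm_pow]
    have : ‖x‖ ^ 2 * ‖q‖ ^ (2 * k + 1) ≤ r ^ 3 * ‖q‖ := by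
      gcongr ?_ * ?_
      · calc ‖x‖ ^ 2 ≤ r ^ 2 := by gcongr
          _ ≤ r ^ 3 := pow_le_pow_right₀ hr.le (by norm_num)
      · calc ‖q‖ ^ (2 * k + 1) ≤ ‖q‖ ^ 1 :=
              pow_le_pow_of_le_one (norm_nonneg _) hq.le (by omega)
          _ = ‖q‖ := pow_one _
    linarith

lemma hasSum_binom (q : ℂ) (hq : ‖q‖ < 1) (x : ℂ) (hx : ‖x‖ < 1) (c : ℕ) :
    HasSum (fun n => x ^ n * qBinom q n c) (x ^ c / qPoch q x (c + 1)) := by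
  have hsum : ∀ c, Summable fun n => x ^ n * qBinom q n c := by
    intro c
    obtain ⟨C, hC, h⟩ := exists_binom_bound q hq
    refine ((summable_geometric_of_lt_one (norm_nonneg x) hx).mul_right C).of_norm_bounded
      fun n => ?_
    rw [norm_mul, norm_pow]
    gcongr
    exact h n c
  induction c with
  | zero =>
    simp only [qBinom_zero_right q hq, mul_one]
    simpa [qPoch] using hasSum_geometric_of_norm_lt_one hx
  | succ c ih =>
    have h1 := (hsum (c + 1)).hasSum
    set S := ∑' n, x ^ n * qBinom q n (c + 1) with hS
    have h2 := (ih.mul_left x).add (h1.mul_left (x * q ^ (c + 1)))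
    have h3 : HasSum (fun n => x ^ (n + 1) * qBinom q (n + 1) (c + 1))
        (x * (x ^ c / qPoch q x (c + 1)) + x * q ^ (c + 1) * S) := by
      refine h2.congr_fun ?_ 
      intro n
      rw [pascal1 q hq]; ring
    have h4 := (hasSum_nat_add_iff' 1).2 h1
    simp only [Finset.sum_range_one, qBinom_of_lt q (Nat.succ_pos c), mul_zero, sub_zero] at h4
    have h5 := h4.unique h3
    have hne := one_sub_ne_zero q x hq hx (c + 1)
    have hne2 := qPoch_ne_zero q x hq hx (c + 1)
    have : S = x ^ (c + 1) / qPoch q x (c + 1 + 1) := by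
      rw [qPoch_succ, eq_div_iff (mul_ne_zero hne2 hne)]
      field_simp at h5
      linear_combination h5
    rwa [this] at h1


lemma hasSum_AA (q : ℂ) (hq : ‖q‖ < 1) (x : ℂ) (hx : ‖x‖ < 1) :
    (Summable fun n => x ^ n * AA q n x) ∧ ∑' n, x ^ n * AA q n x
      = ∑' c : ℕ, q ^ (c ^ 2 + c) * x ^ (2 * c) * (x ^ c / qPoch q x (c + 1)) := by
  obtain ⟨C, hC, h⟩ := exists_binom_bound q hq
  have hg := summable_geometric_of_lt_one (norm_nonneg x) hx
  have hs : Summable fun p : ℕ × ℕ =>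
      q ^ (p.2 ^ 2 + p.2) * x ^ (2 * p.2) * (x ^ p.1 * qBinom q p.1 p.2) := by
    have hb : Summable fun p : ℕ × ℕ => ‖x‖ ^ p.1 * ‖x‖ ^ p.2 * C :=
      (hg.mul_of_nonneg hg (fun _ => pow_nonneg (norm_nonneg x) _)
        (fun _ => pow_nonneg (norm_nonneg x) _)).mul_right C
    refine hb.of_norm_bounded fun p => ?_
    rw [norm_mul, norm_mul, norm_mul, norm_pow, norm_pow, norm_pow]
    calc ‖q‖ ^ (p.2 ^ 2 + p.2) * ‖x‖ ^ (2 * p.2) * (‖x‖ ^ p.1 * ‖qBinom q p.1 p.2‖)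
        ≤ (1 * ‖x‖ ^ p.2) * (‖x‖ ^ p.1 * C) := by
          gcongr ?_ * ?_ * (?_ * ?_)
          · exact pow_le_one₀ (norm_nonneg _) hq.le
          · exact pow_le_pow_of_le_one (norm_nonneg _) hx.le (by omega)
          · exact h _ _
      _ = ‖x‖ ^ p.1 * ‖x‖ ^ p.2 * C := by ring
  have hA : ∀ n, x ^ n * AA q n x
      = ∑' c : ℕ, q ^ (c ^ 2 + c) * x ^ (2 * c) * (x ^ n * qBinom q n c) := by
    intro n
    rw [tsum_eq_sum (s := Finset.range (n + 1)), AA, Finset.mul_sum]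
    · exact Finset.sum_congr rfl fun c _ => by ring
    · intro c hc
      rw [qBinom_of_lt q (by simpa using hc)]
      simp
  simp only [hA]
  refine ⟨hs.prod, ?_⟩
  rw [← Summable.tsum_comm (f := fun n c : ℕ =>
    q ^ (c ^ 2 + c) * x ^ (2 * c) * (x ^ n * qBinom q n c)) hs]
  refine tsum_congr fun c => ?_
  rw [tsum_mul_left, (hasSum_binom q hq x hx c).tsum_eq]

lemma HH_decomp (q : ℂ) (hq : ‖q‖ < 1) (r : ℝ) (hr : 1 < r) (hrq : r ^ 3 * ‖q‖ < 1)
    (x : ℂ) (hx : ‖x‖ < 1) :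
    HH q x = (1 - x) * ∑' n, g1 q n x + ∑' c, g2 q c x := by
  obtain ⟨hs, he⟩ := hasSum_AA q hq x hx
  have h0 : 0 ≤ r ^ 3 * ‖q‖ := by positivity
  obtain ⟨C, hC⟩ := g1_bound q hq r hr hrq
  have hxr : x ∈ Metric.ball (0 : ℂ) r := by rw [mem_ball_zero_iff]; linarith
  have h1 : Summable fun n => g1 q n x :=
    ((summable_geometric_of_lt_one h0 hrq).mul_left C).of_norm_bounded fun n => hC n x hxr
  have h2 : HH q x = (1 - x) * ∑' n, g1 q n x + (1 - x) * KK q x * ∑' n, x ^ n * AA q n x := by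
    rw [← tsum_mul_left, ← tsum_mul_left, ← (h1.mul_left _).tsum_add (hs.mul_left _), HH]
    refine tsum_congr fun n => ?_
    rw [hh, g1, qPoch_succ']
    ring
  rw [h2, he, ← tsum_mul_left (a := (1 - x) * KK q x)]
  congr 1
  refine tsum_congr fun c => ?_
  have hne : qPoch q x (c + 1) ≠ 0 := qPoch_ne_zero q x hq hx _
  rw [g2, KK, qPochInf_add q (x * q) hq c, KK, show x * q ^ c * q = x * q * q ^ c by ring]
  rw [qPoch_succ'] at hne ⊢
  have h3 := left_ne_zero_of_mul hne
  have h4 := right_ne_zero_of_mul hne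
  field_simp
  ring

lemma exists_radius (q : ℂ) (hq : ‖q‖ < 1) : ∃ r : ℝ, 1 < r ∧ r ^ 3 * ‖q‖ < 1 := by
  have h : Tendsto (fun r : ℝ => r ^ 3 * ‖q‖) (𝓝[>] 1) (𝓝 (1 ^ 3 * ‖q‖)) :=
    (Continuous.tendsto (by fun_prop) 1).mono_left nhdsWithin_le_nhds
  have h1 := h.eventually (gt_mem_nhds (by simpa using hq))
  obtain ⟨r, h2, h3⟩ := (h1.and self_mem_nhdsWithin).exists
  exact ⟨r, h3, h2⟩

lemma main_identities (q : ℂ) (hq : ‖q‖ < 1) :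
    (Summable fun n => g1 q n 1) ∧ (Summable fun c => g2 q c 1) ∧
    (Summable fun c => deriv (g2 q c) 1) ∧ (Summable fun k => ff q k 1) ∧
    (Summable fun k => deriv (ff q k) 1) ∧
    (∑' k, ff q k 1 = ∑' c, g2 q c 1) ∧
    (∑' k, deriv (ff q k) 1 = -∑' n, g1 q n 1 + ∑' c, deriv (g2 q c) 1) := by
  obtain ⟨r, hr, hrq⟩ := exists_radius q hq
  have h0 : 0 ≤ r ^ 3 * ‖q‖ := by positivity
  have hg := summable_geometric_of_lt_one h0 hrq
  obtain ⟨C, hC⟩ := g1_bound q hq r hr hrq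
  have b2 := g2_bound q hq r hr hrq
  have bf := ff_bound q hq r hr hrq
  have hU : IsOpen (Metric.ball (0 : ℂ) r) := Metric.isOpen_ball
  have h1U : (1 : ℂ) ∈ Metric.ball (0 : ℂ) r := by rw [mem_ball_zero_iff, norm_one]; exact hr
  have d1 := Complex.differentiableOn_tsum_of_summable_norm (hg.mul_left C)
    (fun n => (g1_diff q hq n).differentiableOn) hU hC
  have d2 := Complex.differentiableOn_tsum_of_summable_norm (hg.mul_left (MB q))
    (fun n => (g2_diff q hq n).differentiableOn) hU b2
  have df := Complex.differentiableOn_tsum_of_summable_norm (hg.mul_right 2)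
    (fun n => (ff_diff q n).differentiableOn) hU bf
  have s2 := Complex.hasSum_deriv_of_summable_norm (hg.mul_left (MB q))
    (fun n => (g2_diff q hq n).differentiableOn) hU b2 h1U
  have sf := Complex.hasSum_deriv_of_summable_norm (hg.mul_right 2)
    (fun n => (ff_diff q n).differentiableOn) hU bf h1U
  have dG : DifferentiableOn ℂ (fun x => (1 - x) * ∑' n, g1 q n x + ∑' c, g2 q c x)
      (Metric.ball (0 : ℂ) r) :=
    (((differentiableOn_const (1 : ℂ)).sub differentiableOn_id).mul d1).add d2
  have heq : Set.EqOn (fun x => ∑' k, ff q k x)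
      (fun x => (1 - x) * ∑' n, g1 q n x + ∑' c, g2 q c x) (Metric.ball (0 : ℂ) r) := by
    refine (df.analyticOnNhd hU).eqOn_of_preconnected_of_eventuallyEq (dG.analyticOnNhd hU)
      (convex_ball (0 : ℂ) r).isPreconnected (z₀ := 0) (by simp; linarith) ?_
    filter_upwards [Metric.ball_mem_nhds (0 : ℂ) one_pos] with x hx
    rw [mem_ball_zero_iff] at hx
    rw [← HH_decomp q hq r hr hrq x hx]
    have hsf : Summable fun k => ff q k x := (hg.mul_right 2).of_norm_bounded fun k =>
      bf k x (by rw [mem_ball_zero_iff]; linarith)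
    exact tendsto_nhds_unique hsf.hasSum.tendsto_sum_nat (tendsto_ff q hq x hx)
  refine ⟨(hg.mul_left C).of_norm_bounded fun n => hC n 1 h1U,
    (hg.mul_left (MB q)).of_norm_bounded fun n => b2 n 1 h1U, s2.summable,
    (hg.mul_right 2).of_norm_bounded fun n => bf n 1 h1U, sf.summable, ?_, ?_⟩
  · simpa using heq h1U
  · have he := (heq.eventuallyEq_of_mem (hU.mem_nhds h1U)).deriv_eq
    rw [sf.tsum_eq, s2.tsum_eq, he]
    have e1 := (d1.differentiableAt (hU.mem_nhds h1U)).hasDerivAt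
    have e2 := (d2.differentiableAt (hU.mem_nhds h1U)).hasDerivAt
    have e3 := ((((hasDerivAt_id (1 : ℂ)).const_sub 1).mul e1).add e2).deriv
    refine Eq.trans e3 ?_
    simp

lemma ff_deriv (q : ℂ) (k : ℕ) : deriv (ff q k) 1
    = (-1) ^ k * q ^ ee k * (5 * k - (5 * k + 2) * q ^ (2 * k + 1)) := by
  have h1 := ((hasDerivAt_pow (5 * k) (1 : ℂ)).const_mul ((-1) ^ k * q ^ ee k)).mul
    (((hasDerivAt_pow 2 (1 : ℂ)).mul_const (q ^ (2 * k + 1))).const_sub 1)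
  have h2 : deriv (ff q k) 1 = _ := h1.deriv
  rw [h2]
  push_cast
  simp only [one_pow, mul_one]
  ring

lemma chi_term1 (q : ℂ) (k : ℕ) :
    (((10 * k + 3 : ℕ) : ℂ) / 2) * (chi20_0 (10 * k + 3) : ℂ) * q ^ (((10 * k + 3) ^ 2 - 9) / 40)
      = (5 * k + 3 / 2) * (-1) ^ k * q ^ ee k := by
  have he : ((10 * k + 3) ^ 2 - 9) / 40 = ee k := by
    have h := two_ee k
    have : (10 * k + 3) ^ 2 - 9 = 40 * ee k := by
      rw [show 40 * ee k = 20 * (2 * ee k) by ring, h]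
      rw [show (10 * k + 3) ^ 2 = 20 * (5 * k ^ 2 + 3 * k) + 9 by ring, Nat.add_sub_cancel]
    rw [this]; simp
  have hc : (chi20_0 (10 * k + 3) : ℂ) = (-1) ^ k := by
    rcases Nat.even_or_odd' k with ⟨m, rfl | rfl⟩
    · rw [chi20_0, if_pos (by omega)]; simp
    · rw [chi20_0, if_neg (by omega), if_pos (by omega)]; simp [pow_succ]
  rw [he, hc]
  push_cast
  ring

lemma chi_term2 (q : ℂ) (k : ℕ) :
    (((10 * k + 7 : ℕ) : ℂ) / 2) * (chi20_0 (10 * k + 7) : ℂ) * q ^ (((10 * k + 7) ^ 2 - 9) / 40)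
      = -((5 * k + 7 / 2) * (-1) ^ k * q ^ (ee k + (2 * k + 1))) := by
  have he : ((10 * k + 7) ^ 2 - 9) / 40 = ee k + (2 * k + 1) := by
    have h := two_ee k
    have : (10 * k + 7) ^ 2 - 9 = 40 * (ee k + (2 * k + 1)) := by
      rw [show 40 * (ee k + (2 * k + 1)) = 20 * (2 * ee k) + 40 * (2 * k + 1) by ring, h]
      rw [show (10 * k + 7) ^ 2 = 20 * (5 * k ^ 2 + 3 * k) + 40 * (2 * k + 1) + 9 by ring,
        Nat.add_sub_cancel]
    rw [this]; simp
  have hc : (chi20_0 (10 * k + 7) : ℂ) = -(-1) ^ k := by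
    rcases Nat.even_or_odd' k with ⟨m, rfl | rfl⟩
    · rw [chi20_0, if_neg (by omega), if_pos (by omega)]; simp
    · rw [chi20_0, if_pos (by omega)]; simp [pow_succ]
  rw [he, hc]
  push_cast
  ring

lemma summable_chi_aux (q : ℂ) (hq : ‖q‖ < 1) (a : ℂ) (e : ℕ → ℕ) (he : ∀ k, k ≤ e k) :
    Summable fun k : ℕ => (5 * (k : ℂ) + a) * (-1) ^ k * q ^ e k := by
  have hq' : ‖(‖q‖ : ℝ)‖ < 1 := by simpa using hq
  have h1 := (summable_pow_mul_geometric_of_norm_lt_one 1 hq').mul_left 5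
  have h2 := (summable_geometric_of_lt_one (norm_nonneg q) hq).mul_left ‖a‖
  refine (h1.add h2).of_norm_bounded fun k => ?_
  rw [norm_mul, norm_mul, norm_pow, norm_pow, norm_neg, norm_one, one_pow, mul_one]
  calc ‖5 * (k : ℂ) + a‖ * ‖q‖ ^ e k ≤ (5 * k + ‖a‖) * ‖q‖ ^ k := by
        gcongr ?_ * ?_
        · refine (norm_add_le _ _).trans ?_
          simp
        · exact pow_le_pow_of_le_one (norm_nonneg _) hq.le (he k)
    _ = _ := by ring

lemma hasSum_chi (q : ℂ) (hq : ‖q‖ < 1) :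
    HasSum (fun n : ℕ => ((n : ℂ) / 2) * (chi20_0 n : ℂ) * q ^ ((n ^ 2 - 9) / 40))
      (∑' k, deriv (ff q k) 1 + 3 / 2 * ∑' k, ff q k 1) := by
  obtain ⟨-, -, -, sf, sd, -, -⟩ := main_identities q hq
  set t : ℕ → ℂ := fun n : ℕ => ((n : ℂ) / 2) * (chi20_0 n : ℂ) * q ^ ((n ^ 2 - 9) / 40) with ht
  have s1 := summable_chi_aux q hq (3 / 2) ee (fun k => by have := le_ee k; omega)
  have s2 := summable_chi_aux q hq (7 / 2) (fun k => ee k + (2 * k + 1))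
    (fun k => by have := le_ee k; omega)
  have e1 : HasSum (fun n => if n % 10 = 3 then t n else 0) _ :=
    (Function.Injective.hasSum_iff (g := fun k : ℕ => 10 * k + 3)
      (fun a b h => by simp only at h; omega) (fun n hn => by
        rw [if_neg]
        intro h
        exact hn ⟨n / 10, by simp only; omega⟩)).1 (s1.hasSum.congr_fun (fun k => by
          simp only [Function.comp]
          rw [if_pos (by omega)]
          exact chi_term1 q k))
  have e2 : HasSum (fun n => if n % 10 = 7 then t n else 0) _ :=
    (Function.Injective.hasSum_iff (g := fun k : ℕ => 10 * k + 7)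
      (fun a b h => by simp only at h; omega) (fun n hn => by
        rw [if_neg]
        intro h
        exact hn ⟨n / 10, by simp only; omega⟩)).1 (s2.hasSum.neg.congr_fun (fun k => by
          simp only [Function.comp]
          rw [if_pos (by omega)]
          exact chi_term2 q k))
  have e3 := e1.add e2
  have e4 : HasSum t _ := e3.congr_fun (fun n => by
    by_cases h3 : n % 10 = 3
    · rw [if_pos h3, if_neg (by omega), add_zero]
    · by_cases h7 : n % 10 = 7
      · rw [if_neg h3, if_pos h7, zero_add]
      · rw [if_neg h3, if_neg h7, ht]
        simp only [chi20_0]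
        rw [if_neg (by omega), if_neg (by omega)]
        simp)
  convert! e4 using 1
  rw [← tsum_mul_left, ← sd.tsum_add (sf.mul_left _), ← tsum_neg, ← s1.tsum_add s2.neg]
  refine tsum_congr fun k => ?_
  rw [ff_deriv, ff]
  ring


lemma qbinomial (p : ℂ) (hp : ‖p‖ < 1) (x : ℂ) (M : ℕ) :
    ∏ i ∈ Finset.range M, (1 + x * p ^ i)
      = ∑ j ∈ Finset.range (M + 1), p ^ (j.choose 2) * x ^ j * qBinom p M j := by
  induction M with
  | zero => simp [qBinom_self p hp]
  | succ M ih =>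
    have hext : ∑ j ∈ Finset.range (M + 1), p ^ (j.choose 2) * x ^ j * qBinom p M j
        = ∑ j ∈ Finset.range (M + 2), p ^ (j.choose 2) * x ^ j * qBinom p M j := by
      rw [Finset.sum_range_succ _ (M + 1), qBinom_of_lt p (by omega : M < M + 1)]
      simp
    rw [Finset.prod_range_succ, ih, mul_add, mul_one]
    conv_lhs => lhs; rw [hext, Finset.sum_range_succ' _ (M + 1)]
    rw [Finset.sum_mul, Finset.sum_range_succ' _ (M + 1), add_right_comm,
      ← Finset.sum_add_distrib, qBinom_zero_right p hp, qBinom_zero_right p hp]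
    congr 1
    refine Finset.sum_congr rfl fun c hc => ?_
    have hc' : c ≤ M := by simpa [Nat.lt_succ_iff] using hc
    rw [pascal2 p hp, Nat.choose_succ_succ' c 1, Nat.choose_one_right]
    obtain ⟨m, rfl⟩ := Nat.exists_eq_add_of_le hc'
    rw [Nat.add_sub_cancel_left]
    ring

lemma pow_choose_mul (p x : ℂ) (N : ℕ) :
    p ^ (N.choose 2) * x ^ N = ∏ i ∈ Finset.range N, (x * p ^ i) := by
  induction N with
  | zero => simp
  | succ N ih =>
    rw [Finset.prod_range_succ, ← ih, Nat.choose_succ_succ' N 1, Nat.choose_one_right]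
    ring

lemma finite_jtp (q : ℂ) (hq : ‖q‖ < 1) (hq0 : q ≠ 0) (N : ℕ) :
    qPoch (q ^ 5) q N * qPoch (q ^ 5) (q ^ 4) N
      = ∑ k ∈ Finset.range (N + 1), (-1) ^ k * q ^ ee k * qBinom (q ^ 5) (2 * N) (N + k)
        - ∑ k ∈ Finset.range N,
          (-1) ^ k * q ^ (ee k + (2 * k + 1)) * qBinom (q ^ 5) (2 * N) (N + k + 1) := by
  set p := q ^ 5 with hp
  have hp0 : p ≠ 0 := pow_ne_zero _ hq0
  have hp1 : ‖p‖ < 1 := by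
    rw [hp, norm_pow]; exact pow_lt_one₀ (norm_nonneg _) hq (by norm_num)
  clear_value p
  set x : ℂ := -q / p ^ N with hx
  have hxp : x * p ^ N = -q := by rw [hx]; field_simp
  have hx0 : x ≠ 0 := by rw [hx]; exact div_ne_zero (neg_ne_zero.2 hq0) (pow_ne_zero _ hp0)
  clear_value x
  set g : ℕ → ℂ := fun j => p ^ (j.choose 2) * x ^ j with hg
  have hg0 : ∀ j, g j ≠ 0 := fun j => mul_ne_zero (pow_ne_zero _ hp0) (pow_ne_zero _ hx0)
  have hgs : ∀ j, g (j + 1) = g j * (x * p ^ j) := by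
    intro j
    simp only [hg]
    rw [Nat.choose_succ_succ' j 1, Nat.choose_one_right]
    ring
  have hup : ∀ k, g (N + k + 1) = -(g N * ((-1) ^ k * q ^ (ee k + (2 * k + 1)))) := by
    intro k
    induction k with
    | zero => rw [add_zero, hgs, hxp, ee_zero]; simp
    | succ k ih =>
      rw [show N + (k + 1) + 1 = (N + k + 1) + 1 by ring, hgs, ih,
        show x * p ^ (N + k + 1) = (x * p ^ N) * p ^ (k + 1) by ring, hxp, hp, ee_succ]
      ring
  have hdown : ∀ k, k ≤ N → g (N - k) = g N * ((-1) ^ k * q ^ ee k) := by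
    intro k
    induction k with
    | zero => intro _; simp [ee_zero]
    | succ k ih =>
      intro hk
      have h1 := ih (by omega)
      obtain ⟨m, hm⟩ : ∃ m, N = m + (k + 1) := ⟨N - (k + 1), by omega⟩
      have hxm : x * p ^ m ≠ 0 := mul_ne_zero hx0 (pow_ne_zero _ hp0)
      rw [show N - k = m + 1 by omega, hgs] at h1
      rw [show N - (k + 1) = m by omega]
      have h2 : x * p ^ m * p ^ (k + 1) = -q := by rw [← hxp, hm]; ring
      apply mul_right_cancel₀ hxm
      rw [h1, ee_succ]
      apply mul_right_cancel₀ (pow_ne_zero (k + 1) hp0)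
      have h3 : g N * ((-1) ^ (k + 1) * q ^ (ee k + (5 * k + 4))) * (x * p ^ m) * p ^ (k + 1)
        = g N * ((-1) ^ (k + 1) * q ^ (ee k + (5 * k + 4))) * (x * p ^ m * p ^ (k + 1)) := by ring
      rw [h3, h2, hp]
      ring
  have hprod : ∏ i ∈ Finset.range (2 * N), (1 + x * p ^ i)
      = g N * (qPoch p q N * qPoch p (q ^ 4) N) := by
    rw [two_mul, Finset.prod_range_add]
    have h1 : ∏ i ∈ Finset.range N, (1 + x * p ^ (N + i)) = qPoch p q N := by
      refine Finset.prod_congr rfl fun i _ => ?_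
      rw [pow_add, ← mul_assoc, hxp]; ring
    have h2 : ∏ i ∈ Finset.range N, (1 + x * p ^ i) = g N * qPoch p (q ^ 4) N := by
      have h3 : g N = ∏ i ∈ Finset.range N, (x * p ^ i) := pow_choose_mul p x N
      rw [h3, qPoch, ← Finset.prod_range_reflect (fun i => 1 - q ^ 4 * p ^ i),
        ← Finset.prod_mul_distrib]
      refine Finset.prod_congr rfl fun i hi => ?_
      have hi' : i < N := by simpa using hi
      obtain ⟨m, hm⟩ : ∃ m, N = i + 1 + m := ⟨N - (i + 1), by omega⟩
      rw [show N - 1 - i = m by omega]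
      have h4 : x * p ^ i * p ^ (m + 1) = -q := by rw [← hxp, hm]; ring
      apply mul_left_cancel₀ hq0
      linear_combination h4 - x * p ^ i * p ^ m * hp
    rw [h1, h2]; ring
  have hsum : ∑ j ∈ Finset.range (2 * N + 1), g j * qBinom p (2 * N) j
      = g N * (∑ k ∈ Finset.range (N + 1), (-1) ^ k * q ^ ee k * qBinom p (2 * N) (N + k)
        - ∑ k ∈ Finset.range N,
          (-1) ^ k * q ^ (ee k + (2 * k + 1)) * qBinom p (2 * N) (N + k + 1)) := by
    rw [show 2 * N + 1 = (N + 1) + N by ring, Finset.sum_range_add, mul_sub, Finset.mul_sum,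
      Finset.mul_sum, sub_eq_add_neg, ← Finset.sum_neg_distrib,
      ← Finset.sum_range_reflect _ (N + 1)]
    congr 1
    · refine Finset.sum_congr rfl fun k hk => ?_
      have hk' : k ≤ N := by simpa [Nat.lt_succ_iff] using hk
      rw [show N + 1 - 1 - k = N - k by omega, hdown k hk',
        ← qBinom_symm p (by omega : N - k ≤ 2 * N), show 2 * N - (N - k) = N + k by omega]
      ring
    · refine Finset.sum_congr rfl fun k _ => ?_
      rw [show N + 1 + k = N + k + 1 by ring, hup]
      ring
  have hfin := qbinomial p hp1 x (2 * N)
  rw [hprod] at hfin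
  exact mul_left_cancel₀ (hg0 N) (hfin.trans hsum)

lemma tendsto_binom (p : ℂ) (hp : ‖p‖ < 1) (k : ℕ) :
    Tendsto (fun N => qPoch p p N * qBinom p (2 * N) (N + k)) atTop (𝓝 1) := by
  have h0 := tendsto_qPoch p p hp
  have hne := qPochInf_ne_zero p p hp hp
  have t1 : Tendsto (fun N : ℕ => 2 * N) atTop atTop :=
    tendsto_atTop_mono (fun N => show id N ≤ 2 * N by simp only [id]; omega) tendsto_id
  have t2 : Tendsto (fun N : ℕ => N + k) atTop atTop := tendsto_add_atTop_nat k
  have t3 : Tendsto (fun N : ℕ => N - k) atTop atTop := tendsto_sub_atTop_nat k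
  have h := h0.mul ((h0.comp t1).div ((h0.comp t2).mul (h0.comp t3)) (mul_ne_zero hne hne))
  have e : qPochInf p p * (qPochInf p p / (qPochInf p p * qPochInf p p)) = 1 := by field_simp
  rw [e] at h
  refine h.congr' ?_
  filter_upwards [eventually_ge_atTop k] with N hN
  simp only [Function.comp, Pi.div_apply]
  rw [qBinom, if_pos (by omega), show 2 * N - (N + k) = N - k by omega]

lemma jtp (q : ℂ) (hq : ‖q‖ < 1) :
    ∑' k, ff q k 1 = qPochInf (q ^ 5) q * qPochInf (q ^ 5) (q ^ 4) * qPochInf (q ^ 5) (q ^ 5) := by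
  by_cases hq0 : q = 0
  · subst hq0
    rw [tsum_eq_single 0]
    · simp [ff, ee_zero, qPochInf]
    · intro k hk
      have : ee k ≠ 0 := by have := le_ee k; omega
      simp [ff, this]
  set p := q ^ 5 with hp
  have hp1 : ‖p‖ < 1 := by
    rw [hp, norm_pow]; exact pow_lt_one₀ (norm_nonneg _) hq (by norm_num)
  obtain ⟨C, hC, hb⟩ := exists_binom_bound p hp1
  have hM := MB_pos p
  have hlim : Tendsto (fun N => (qPoch p q N * qPoch p (q ^ 4) N) * qPoch p p N) atTop
      (𝓝 (qPochInf p q * qPochInf p (q ^ 4) * qPochInf p p)) :=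
    ((tendsto_qPoch p _ hp1).mul (tendsto_qPoch p _ hp1)).mul (tendsto_qPoch p _ hp1)
  set T : ℕ → ℕ → ℂ := fun N k => (-1) ^ k * q ^ ee k * (qPoch p p N * qBinom p (2 * N) (N + k)
      - q ^ (2 * k + 1) * (qPoch p p N * qBinom p (2 * N) (N + (k + 1)))) with hT
  have heq : ∀ N, (qPoch p q N * qPoch p (q ^ 4) N) * qPoch p p N = ∑' k, T N k := by
    intro N
    rw [finite_jtp q hq hq0 N, tsum_eq_sum (s := Finset.range (N + 1))]
    · have hz : ∑ k ∈ Finset.range N,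
          (-1) ^ k * q ^ (ee k + (2 * k + 1)) * qBinom p (2 * N) (N + k + 1)
          = ∑ k ∈ Finset.range (N + 1),
          (-1) ^ k * q ^ (ee k + (2 * k + 1)) * qBinom p (2 * N) (N + k + 1) := by
        rw [Finset.sum_range_succ _ N, qBinom_of_lt p (by omega : 2 * N < N + N + 1)]
        simp
      rw [← hp, hz, ← Finset.sum_sub_distrib, Finset.sum_mul]
      refine Finset.sum_congr rfl fun k _ => ?_
      simp only [hT]
      rw [← add_assoc N k 1]
      ring
    · intro k hk
      have hk' : N < k := by
        simp only [Finset.mem_range, not_lt] at hk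
        omega
      simp only [hT]
      rw [qBinom_of_lt p (by omega : 2 * N < N + k), qBinom_of_lt p (by omega : 2 * N < N + (k + 1))]
      simp
  have hT1 : Tendsto (fun N => ∑' k, T N k) atTop (𝓝 (∑' k, ff q k 1)) := by
    refine tendsto_tsum_of_dominated_convergence
      (bound := fun k : ℕ => ‖q‖ ^ k * (MB p * C + MB p * C))
      ((summable_geometric_of_lt_one (norm_nonneg q) hq).mul_right _) (fun k => ?_)
      (Eventually.of_forall fun N k => ?_)
    · have h := ((tendsto_binom p hp1 k).sub
        ((tendsto_binom p hp1 (k + 1)).const_mul (q ^ (2 * k + 1)))).const_mul ((-1) ^ k * q ^ ee k)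
      have e : ff q k 1 = (-1) ^ k * q ^ ee k * (1 - q ^ (2 * k + 1) * 1) := by simp [ff]
      rw [e]
      exact h
    · have hB : ∀ j, ‖qPoch p p N * qBinom p (2 * N) j‖ ≤ MB p * C := by
        intro j
        rw [norm_mul]
        gcongr
        · exact norm_qPoch_le p p hp1 hp1.le N
        · exact hb _ _
      simp only [hT]
      rw [norm_mul, norm_mul, norm_pow, norm_pow, norm_neg, norm_one, one_pow, one_mul]
      gcongr ?_ * ?_
      · exact pow_le_pow_of_le_one (norm_nonneg _) hq.le (by have := le_ee k; omega)
      · refine (norm_sub_le _ _).trans (add_le_add (hB _) ?_)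
        rw [norm_mul, norm_pow]
        exact (mul_le_of_le_one_left (norm_nonneg _) (pow_le_one₀ (norm_nonneg _) hq.le)).trans
          (hB _)
  exact tendsto_nhds_unique hT1 (hlim.congr heq)

end Stmt6

theorem stmt_6 (q : ℂ) (hq : ‖q‖ < 1) :
    Summable (fun n : ℕ => ((n : ℂ) / 2) * (chi20_0 n : ℂ) * q ^ ((n ^ 2 - 9) / 40)) ∧
    Summable (fun n : ℕ => ∑ c ∈ Finset.range (n + 1),
      (qPoch q q n - qPochInf q q) * q ^ (c ^ 2 + c) * qBinom q n c) ∧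
    Summable (fun c : ℕ => q ^ (c ^ 2 + c) / qPoch q q c *
      (3 * (c : ℂ) + ∑ i ∈ Finset.Icc 1 c, q ^ i / (1 - q ^ i))) ∧
    Summable (fun i : ℕ => q ^ (i + 1) / (1 - q ^ (i + 1))) ∧
    ∑' n : ℕ, ((n : ℂ) / 2) * (chi20_0 n : ℂ) * q ^ ((n ^ 2 - 9) / 40)
      = -∑' n : ℕ, ∑ c ∈ Finset.range (n + 1),
            (qPoch q q n - qPochInf q q) * q ^ (c ^ 2 + c) * qBinom q n c
        + qPochInf q q * ∑' c : ℕ, q ^ (c ^ 2 + c) / qPoch q q c *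
            (3 * (c : ℂ) + ∑ i ∈ Finset.Icc 1 c, q ^ i / (1 - q ^ i))
        + qPochInf (q ^ 5) q * qPochInf (q ^ 5) (q ^ 4) * qPochInf (q ^ 5) (q ^ 5) *
            (3 / 2 - ∑' i : ℕ, q ^ (i + 1) / (1 - q ^ (i + 1))) := by
  obtain ⟨s1, s2, s3, sf, sd, e1, e2⟩ := Stmt6.main_identities q hq
  have hchi := Stmt6.hasSum_chi q hq
  have hne := Stmt6.qPochInf_ne_zero q q hq hq
  have hL : Summable (fun i : ℕ => q ^ (i + 1) / (1 - q ^ (i + 1))) := by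
    simpa using Stmt6.summable_lambert q 1 hq (by simp)
  set L := ∑' i : ℕ, q ^ (i + 1) / (1 - q ^ (i + 1)) with hLdef
  have hg1 : ∀ n, Stmt6.g1 q n 1 = ∑ c ∈ Finset.range (n + 1),
      (qPoch q q n - qPochInf q q) * q ^ (c ^ 2 + c) * qBinom q n c := by
    intro n
    simp only [Stmt6.g1, Stmt6.KK, Stmt6.AA, one_mul, one_pow, mul_one, Finset.mul_sum]
    exact Finset.sum_congr rfl fun c _ => by ring
  have hg2 : ∀ c, q ^ (c ^ 2 + c) / qPoch q q c *
      (3 * (c : ℂ) + ∑ i ∈ Finset.Icc 1 c, q ^ i / (1 - q ^ i))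
      = (qPochInf q q)⁻¹ * (deriv (Stmt6.g2 q c) 1 + L * Stmt6.g2 q c 1) := by
    intro c
    rw [Stmt6.g2_deriv q hq c, sub_add_cancel, inv_mul_cancel_left₀ hne]
  have h3 := (s3.add (s2.mul_left L)).mul_left (qPochInf q q)⁻¹
  have hj := Stmt6.jtp q hq
  refine ⟨hchi.summable, ?_, ?_, hL, ?_⟩
  · simpa only [hg1] using s1
  · simpa only [hg2] using h3
  · rw [hchi.tsum_eq]
    simp only [hg2, ← hg1]
    rw [tsum_mul_left, mul_inv_cancel_left₀ hne, s3.tsum_add (s2.mul_left L), tsum_mul_left,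
      e2, ← hj, ← e1]
    ring
end
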